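/- Let X be the punctured Möbius band with boundary circles C₁ and C₂. Suppose f : X → X is a boundary-preserving map with f(C₂) ⊆ C₁ and f(C₁) ⊆ C₂, such that the restriction, viewed as a map f|C₂ : C₂ → C₁, is essential, while the restriction f|C₁ : C₁ → ∂X is inessential. Then f is boundary-homotopic to a map g : X → X having exactly one fixed point. -/

import Mathlib

open Set

namespace PMB

/-- The square [0,1] × [−1,1] as a subspace of ℝ². -/
def Sq : Set (ℝ × ℝ) := Set.Icc 0 1 ×ˢ Set.Icc (-1) 1

/-- The identification (0,y) ∼ (1,−y) on the square. -/
def rel (p q : Sq) : Prop :=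
  (p : ℝ × ℝ) = (q : ℝ × ℝ) ∨
  ((p : ℝ × ℝ).1 = 0 ∧ (q : ℝ × ℝ).1 = 1 ∧ (p : ℝ × ℝ).2 = -(q : ℝ × ℝ).2) ∨
  ((p : ℝ × ℝ).1 = 1 ∧ (q : ℝ × ℝ).1 = 0 ∧ (q : ℝ × ℝ).2 = -(p : ℝ × ℝ).2)

/-- The Möbius band: the quotient of the square by the identification. -/
def M := Quot rel

instance : TopologicalSpace M := inferInstanceAs (TopologicalSpace (Quot rel))

/-- The quotient map. -/
def qm : Sq → M := Quot.mk rel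

/-- The open disc of radius 1/4 centred at (1/2, 0). -/
def Bdisc : Set (ℝ × ℝ) := Metric.ball (1/2, 0) (1/4)

/-- The circle of radius 1/4 centred at (1/2, 0). -/
def Scirc : Set (ℝ × ℝ) := Metric.sphere (1/2, 0) (1/4)

/-- The punctured Möbius band, as a subset of the Möbius band. -/
def Xset : Set M := {m | m ∉ qm '' {p : Sq | (p : ℝ × ℝ) ∈ Bdisc}}

/-- The punctured Möbius band as a topological space. -/
abbrev X : Type := ↥Xset

/-- The boundary circle of the Möbius band. -/
def C1 : Set X := {x | ∃ p : Sq, qm p = (x : M) ∧ ((p : ℝ × ℝ).2 = 1 ∨ (p : ℝ × ℝ).2 = -1)}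

/-- The boundary circle coming from the removed disc. -/
def C2 : Set X := {x | ∃ p : Sq, qm p = (x : M) ∧ (p : ℝ × ℝ) ∈ Scirc}

/-- The boundary of the punctured Möbius band. -/
def Bd : Set X := C1 ∪ C2

/-- A self-map of the punctured Möbius band is boundary-preserving if it sends ∂X into ∂X. -/
def BoundaryPreserving (f : C(X, X)) : Prop := MapsTo f Bd Bd

/-- Two self-maps are boundary-homotopic if there is a homotopy between them keeping
∂X inside ∂X at all times. -/
def BoundaryHomotopic (f g : C(X, X)) : Prop :=
  ∃ H : ContinuousMap.Homotopy f g, ∀ x : X, x ∈ Bd → ∀ t : unitInterval, H (t, x) ∈ Bd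

/-- A continuous map is inessential if it is homotopic to a constant map. -/
def Inessential {α β : Type*} [TopologicalSpace α] [TopologicalSpace β] (f : C(α, β)) : Prop :=
  ∃ b : β, ContinuousMap.Homotopic f (ContinuousMap.const α b)

/-- A continuous map is essential if it is not homotopic to a constant map. -/
def Essential {α β : Type*} [TopologicalSpace α] [TopologicalSpace β] (f : C(α, β)) : Prop :=
  ¬ Inessential f

/-- The restriction of a self-map of X to a subset `s` mapped into a subset `t`,
as a continuous map between the subspaces. -/
def restrictMap (f : C(X, X)) {s t : Set X} (h : MapsTo f s t) : C(s, t) :=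
  ⟨fun x => ⟨f x, h x.2⟩, Continuous.subtype_mk (f.continuous.comp continuous_subtype_val) _⟩

/-!
Since `f` maps `C1` into `C2` and is inessential there, `f` can be deformed near `C1` to be constant
on `C1`; call the result `f` again. In polar coordinates the punctured Möbius band is a rectangle
whose bottom wraps around `C2`, whose sides are glued to each other, and whose top reads
`y * y * x`, where the letter `x` stands for `C1` and the two letters `y` are glued to each other.
Its outer rim is thus a rose with petals `x` and `y`, onto which the band retracts. Lift `f`, pushed
into the rose, from the rectangle to the Cayley tree of the free group on `x` and `y`. If `g` is the
deck transformation by which the lift changes along the letter `y`, then, `f` being constant on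
`C1`, the lifts of the two sides differ by `g ^ 2`. The lift of the bottom lies in the line spanned
by the powers of `x`, because `f` maps `C2` into `C1`. Hence `g ^ 2` is a power of `x`, and so is
`g`. Contracting the tree onto that line equivariantly under the powers of `x` then deforms `f` to a
map into `C1`, through maps that send `C2` into `C1` and are constant on `C1`.

Under this deformation the value on `C1` traces a path from `C2` to `C1`. Inserting that path into a
collar of `C1` makes the deformation boundary preserving. The final map sends the complement of the
collar into `C1`, without fixed points. On the collar it depends only on the height, and follows a
path from `C1` to `C2` that first descends radially: only this radial descent meets the ascending
height, and exactly once.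
-/

section FreeGroup

open FreeGroup

variable {α : Type*}

lemma mk_singleton_false (b : α) : mk [(b, false)] = (of b)⁻¹ := rfl

variable {A : Set α}

variable (A) in
/-- The free factor of the free group spanned by the letters in `A`. -/
abbrev freeFactor : Subgroup (FreeGroup α) := Subgroup.closure (of '' A)

lemma mk_mem_freeFactor {L : List (α × Bool)} (hL : ∀ l ∈ L, l.1 ∈ A) :
    mk L ∈ freeFactor A := by
  induction L with
  | nil => exact one_mem _
  | cons l L ih =>
    rw [← List.singleton_append, ← mul_mk]
    refine mul_mem ?_ (ih fun l hl => hL l (List.mem_cons_of_mem _ hl))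
    have hmem : of l.1 ∈ freeFactor A := Subgroup.subset_closure ⟨_, hL l (by simp), rfl⟩
    obtain ⟨a, _ | _⟩ := l
    exacts [inv_mem hmem, hmem]

lemma mul_of_mem_freeFactor_iff {g : FreeGroup α} {a : α} (ha : a ∈ A) :
    g * of a ∈ freeFactor A ↔ g ∈ freeFactor A :=
  Subgroup.mul_mem_cancel_right _ (Subgroup.subset_closure ⟨a, ha, rfl⟩)

section Word

variable [DecidableEq α] {w : FreeGroup α}

lemma toWord_mk_of_isInfix {L : List (α × Bool)} (h : L <:+: w.toWord) :
    (mk L).toWord = L := by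
  rw [toWord_mk, (isReduced_toWord.infix h).reduce_eq]

lemma mk_mul_mk_of_toWord_eq_append {L L' : List (α × Bool)} (h : w.toWord = L ++ L') :
    mk L * mk L' = w := by
  rw [mul_mk, ← h, mk_toWord]

lemma toWord_mul_of (w : FreeGroup α) (b : α) :
    (∃ L, w.toWord = L ++ [(b, false)] ∧ w * of b = mk L) ∨
      (w * of b).toWord = w.toWord ++ [(b, true)] := by
  by_cases h : FreeGroup.IsReduced (w.toWord ++ [(b, true)])
  · exact Or.inr (by rw [toWord_mul, toWord_of, h.reduce_eq])
  · left
    obtain ⟨L, hL⟩ : ∃ L, w.toWord = L ++ [(b, false)] := by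
      rcases List.eq_nil_or_concat' w.toWord with hnil | ⟨L, ⟨c, e⟩, hL⟩
      · simp [hnil] at h
      · have hred : FreeGroup.IsReduced (L ++ [(c, e)]) := hL ▸ isReduced_toWord
        refine ⟨L, ?_⟩
        by_contra hne
        refine h (hL ▸ hred.append_overlap ?_ (by simp) : FreeGroup.IsReduced (w.toWord ++ _))
        rw [hL] at hne
        simp only [List.cons_append, List.nil_append, isReduced_cons_cons, IsReduced.singleton,
          and_true]
        rintro rfl
        simpa using hne
    refine ⟨L, hL, ?_⟩
    rw [← mk_mul_mk_of_toWord_eq_append hL, mk_singleton_false, inv_mul_cancel_right]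

/-- The reduced word of `w` starts with the letter `a` (and not with `a⁻¹`). -/
def StartsWith (w : FreeGroup α) (a : α) : Prop := w.toWord.head? = some (a, true)

lemma not_startsWith_one (a : α) : ¬ StartsWith 1 a := by simp [StartsWith]

lemma startsWith_of (a : α) : StartsWith (of a) a := by simp [StartsWith]

lemma startsWith_mul_of {a b : α} :
    StartsWith (w * of b) a ↔ (w = 1 ∧ a = b) ∨ StartsWith w a := by
  unfold StartsWith
  rcases toWord_mul_of w b with ⟨L, hw, h⟩ | h
  · have hw1 : w ≠ 1 := by rintro rfl; simp at hw
    rw [h, toWord_mk_of_isInfix (w := w) (hw ▸ List.infix_append' [] _ _), hw]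
    cases L <;> simp [hw1]
  · rw [h]
    by_cases hw1 : w = 1
    · simp [hw1, eq_comm]
    · obtain ⟨l, L, hl⟩ := List.exists_cons_of_ne_nil (mt toWord_eq_nil_iff.1 hw1)
      simp [hl, hw1]

lemma exists_startsWith_or_not_startsWith (hw : w ≠ 1) :
    (∃ a, StartsWith w a) ∨ ∃ a, ¬ StartsWith (of a * w) a := by
  obtain ⟨⟨a, e⟩, L, hl⟩ := List.exists_cons_of_ne_nil (mt toWord_eq_nil_iff.1 hw)
  cases e
  · right
    have hmul : of a * w = mk L := by
      rw [← mk_mul_mk_of_toWord_eq_append (L := [(a, false)]) hl, mk_singleton_false,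
        mul_inv_cancel_left]
    have hred : FreeGroup.IsReduced ((a, false) :: L) := hl ▸ isReduced_toWord
    refine ⟨a, ?_⟩
    rw [StartsWith, hmul, toWord_mk_of_isInfix (w := w) (hl ▸ (List.suffix_cons _ L).isInfix)]
    cases L with
    | nil => simp
    | cons l L => rintro ⟨⟩; simp [isReduced_cons_cons] at hred
  · exact Or.inl ⟨a, by simp [StartsWith, hl]⟩

open Classical in
variable (A) in
/-- The distance from `w` to the free factor spanned by `A` in the Cayley tree: the length of the
reduced word that remains after deleting its longest initial segment with letters in `A`. -/
noncomputable def depth (w : FreeGroup α) : ℕ :=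
  (w.toWord.dropWhile fun l => decide (l.1 ∈ A)).length

lemma depth_of_mul {a : α} (ha : a ∈ A) (w : FreeGroup α) : depth A (of a * w) = depth A w := by
  unfold depth
  rw [toWord_mul, toWord_of, List.singleton_append, reduce.cons, reduce_toWord]
  rcases w.toWord with _ | ⟨⟨b, e⟩, L⟩
  · simp [ha]
  · by_cases h : a = b ∧ e = false
    · simp [← h.1, h.2, ha]
    · have : ¬(a = b ∧ true = !e) := by simpa using h
      simp only [this, if_false, List.dropWhile_cons, ha, decide_true, if_true]

lemma depth_mul_of_mem {h : FreeGroup α} (hh : h ∈ freeFactor A) :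
    ∀ w : FreeGroup α, depth A (h * w) = depth A w := by
  induction hh using Subgroup.closure_induction with
  | mem _ hx => obtain ⟨a, ha, rfl⟩ := hx; exact depth_of_mul ha
  | one => simp
  | mul x y _ _ hx hy => intro w; rw [mul_assoc, hx, hy]
  | inv x _ hx => intro w; rw [← hx, mul_inv_cancel_left]

lemma depth_eq_zero : depth A w = 0 ↔ w ∈ freeFactor A := by
  refine ⟨fun h => ?_, fun h => ?_⟩
  · rw [← mk_toWord (x := w)]
    exact mk_mem_freeFactor (by simpa [depth] using h)
  · simpa [depth] using depth_mul_of_mem h 1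

lemma mem_freeFactor_iff : w ∈ freeFactor A ↔ ∀ l ∈ w.toWord, l.1 ∈ A := by
  rw [← depth_eq_zero]
  simp [depth]

lemma length_dropWhile_concat {β : Type*} {p : β → Bool} {L : List β} {l : β}
    (h : ¬ ∀ k ∈ L ++ [l], p k) :
    ((L ++ [l]).dropWhile p).length = (L.dropWhile p).length + 1 := by
  rw [List.dropWhile_append]
  split_ifs with hL
  · have hnil : L.dropWhile p = [] := List.isEmpty_iff.1 hL
    have hl : ¬ p l := fun hl => h fun k hk => by
      rcases List.mem_append.1 hk with hk | hk
      · exact List.dropWhile_eq_nil_iff.1 hnil k hk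
      · rwa [List.mem_singleton.1 hk]
    simp [hnil, hl]
  · simp

lemma depth_eq_of_toWord_eq_concat {L : List (α × Bool)} {l : α × Bool}
    (hw : w.toWord = L ++ [l]) (hA : w ∉ freeFactor A) :
    depth A w = depth A (mk L) + 1 := by
  rw [mem_freeFactor_iff, hw] at hA
  unfold depth
  rw [toWord_mk_of_isInfix (w := w) (hw ▸ List.infix_append' [] _ _), hw]
  exact length_dropWhile_concat (by simpa using hA)

lemma depth_mul_of {b : α} (h : ¬ (w ∈ freeFactor A ∧ b ∈ A)) :
    depth A (w * of b) = depth A w + 1 ∨ depth A w = depth A (w * of b) + 1 := by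
  rw [mem_freeFactor_iff] at h
  rcases toWord_mul_of w b with ⟨L, hw, hmul⟩ | hmul
  · right
    rw [hmul]
    refine depth_eq_of_toWord_eq_concat hw fun hmem => h ?_
    rw [mem_freeFactor_iff] at hmem
    exact ⟨hmem, hmem (b, false) (by simp [hw])⟩
  · left
    nth_rw 2 [← mk_toWord (x := w)]
    refine depth_eq_of_toWord_eq_concat hmul fun hmem => h ?_
    rw [mem_freeFactor_iff, hmul] at hmem
    exact ⟨fun l hl => hmem l (by simp [hl]), hmem (b, true) (by simp)⟩

lemma exists_depth_pred (hw : w ∉ freeFactor A) :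
    (∃ g b, w = g * of b ∧ depth A w = depth A g + 1) ∨
      ∃ b, depth A w = depth A (w * of b) + 1 := by
  rcases List.eq_nil_or_concat' w.toWord with hnil | ⟨L, ⟨b, e⟩, hL⟩
  · exact absurd (toWord_eq_nil_iff.1 hnil ▸ one_mem _) hw
  have hdepth := depth_eq_of_toWord_eq_concat hL hw
  have hmul := mk_mul_mk_of_toWord_eq_append hL
  cases e
  · rw [mk_singleton_false, mul_inv_eq_iff_eq_mul] at hmul
    exact Or.inr ⟨b, hmul ▸ hdepth⟩
  · exact Or.inl ⟨_, b, hmul.symm, hdepth⟩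

end Word

lemma mem_freeFactor_of_pow_mem {w : FreeGroup α} {n : ℕ} (h : w ^ (n + 1) ∈ freeFactor A) :
    w ∈ freeFactor A := by
  classical
  have hpow := (toWord_pow w (n + 1)).trans
    (reduceCyclically.reduce_flatten_replicate_succ isReduced_toWord n)
  rw [mem_freeFactor_iff, hpow] at h
  rw [mem_freeFactor_iff, ← reduceCyclically.conj_conjugator_reduceCyclically w.toWord]
  refine fun l hl => h l ?_
  simp only [List.mem_append, List.mem_flatten, List.mem_replicate] at hl ⊢
  rcases hl with (hl | hl) | hl
  · exact Or.inl (Or.inl hl)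
  · exact Or.inl (Or.inr ⟨_, ⟨n.succ_ne_zero, rfl⟩, hl⟩)
  · exact Or.inr hl

end FreeGroup

section CayleyTree

open FreeGroup

/-- Edges of the Cayley tree of the free group: `(g, a)` joins the vertex `g` to `g * of a`. -/
abbrev CayleyEdge (α : Type*) := FreeGroup α × α

variable {α : Type*} [DecidableEq α]

open Classical in
/-- A vertex `g` of the Cayley tree. A point of the tree is encoded by its coordinates on all edges,
the coordinate on an edge being the position in `[0, 1]` of its nearest-point projection to that
edge; for a vertex `g` the coordinate on `(h, a)` is `1` exactly if `h⁻¹ * g` starts with `a`. -/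
noncomputable def vertex (g : FreeGroup α) : CayleyEdge α → ℝ :=
  fun ε => if StartsWith (ε.1⁻¹ * g) ε.2 then 1 else 0

open Classical in
/-- The point at parameter `s` on the edge `ε` of the Cayley tree. -/
noncomputable def edgePoint (ε : CayleyEdge α) (s : ℝ) : CayleyEdge α → ℝ :=
  Function.update (vertex ε.1) ε s

lemma vertex_eq_zero_or_one (g : FreeGroup α) (ε : CayleyEdge α) :
    vertex g ε = 0 ∨ vertex g ε = 1 := by
  unfold vertex; split_ifs <;> simp

lemma vertex_fst (ε : CayleyEdge α) : vertex ε.1 ε = 0 := by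
  simp [vertex, not_startsWith_one]

lemma vertex_mul_of_self (ε : CayleyEdge α) : vertex (ε.1 * of ε.2) ε = 1 := by
  simp [vertex, startsWith_of]

lemma vertex_mul_of_inv (g : FreeGroup α) (a : α) : vertex g (g * (of a)⁻¹, a) = 1 := by
  simpa using vertex_mul_of_self (g * (of a)⁻¹, a)

lemma vertex_mul_of {g : FreeGroup α} {a : α} {ε : CayleyEdge α} (h : ε ≠ (g, a)) :
    vertex (g * of a) ε = vertex g ε := by
  have : ¬ (ε.1⁻¹ * g = 1 ∧ ε.2 = a) := fun h' => h (Prod.ext (inv_mul_eq_one.1 h'.1) h'.2)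
  classical
  refine if_congr ?_ rfl rfl
  simp only [← mul_assoc, startsWith_mul_of, this, false_or]

lemma exists_vertex_eq_of_ne {g h : FreeGroup α} (hgh : h ≠ g) :
    (∃ a, vertex g (h, a) = 1) ∨ ∃ a, vertex g (h * (of a)⁻¹, a) = 0 := by
  refine (exists_startsWith_or_not_startsWith (mt inv_mul_eq_one.1 hgh)).imp ?_ ?_
  · exact fun ⟨a, ha⟩ => ⟨a, if_pos ha⟩
  · exact fun ⟨a, ha⟩ => ⟨a, if_neg (by simpa [mul_assoc] using ha)⟩

lemma vertex_injective : Function.Injective (vertex (α := α)) := fun g h e => by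
  by_contra hne
  rcases exists_vertex_eq_of_ne hne with ⟨a, ha⟩ | ⟨a, ha⟩
  · rw [← e, vertex_fst (g, a)] at ha; exact zero_ne_one ha
  · rw [← e, vertex_mul_of_inv] at ha; exact one_ne_zero ha

@[simp]
lemma edgePoint_self (ε : CayleyEdge α) (s : ℝ) : edgePoint ε s ε = s := by simp [edgePoint]

lemma edgePoint_of_ne {ε ε' : CayleyEdge α} (h : ε' ≠ ε) (s : ℝ) :
    edgePoint ε s ε' = vertex ε.1 ε' := by simp [edgePoint, h]

lemma edgePoint_zero (ε : CayleyEdge α) : edgePoint ε 0 = vertex ε.1 := by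
  rw [edgePoint, ← vertex_fst ε, Function.update_eq_self]

open Classical in
lemma edgePoint_eq_update (ε : CayleyEdge α) (s : ℝ) :
    edgePoint ε s = Function.update (vertex (ε.1 * of ε.2)) ε s := by
  funext ε'
  by_cases h : ε' = ε
  · simp [h]
  · rw [edgePoint_of_ne h, Function.update_of_ne h, vertex_mul_of h]

lemma edgePoint_one (ε : CayleyEdge α) : edgePoint ε 1 = vertex (ε.1 * of ε.2) := by
  rw [edgePoint_eq_update, ← vertex_mul_of_self ε, Function.update_eq_self]

lemma continuous_edgePoint (ε : CayleyEdge α) : Continuous (edgePoint ε) := by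
  unfold edgePoint
  fun_prop

lemma edgePoint_eq_or_eq_vertex {ε : CayleyEdge α} {s : ℝ} (hs : s = 0 ∨ s = 1) :
    ∃ g, edgePoint ε s = vertex g ∧ (g = ε.1 ∨ g = ε.1 * of ε.2) := by
  rcases hs with rfl | rfl
  exacts [⟨_, edgePoint_zero ε, Or.inl rfl⟩, ⟨_, edgePoint_one ε, Or.inr rfl⟩]

lemma eq_of_edgePoint_eq {ε ε' : CayleyEdge α} {s s' : ℝ} (h : edgePoint ε s = edgePoint ε' s') :
    (ε = ε' ∧ s = s') ∨ ((s = 0 ∨ s = 1) ∧ (s' = 0 ∨ s' = 1)) := by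
  by_cases hε : ε = ε'
  · subst hε
    exact Or.inl ⟨rfl, by simpa using congrFun h ε⟩
  · have hs : s = vertex ε'.1 ε := by
      simpa [edgePoint_of_ne hε] using congrFun h ε
    have hs' : vertex ε.1 ε' = s' := by
      simpa [edgePoint_of_ne (Ne.symm hε)] using congrFun h ε'
    exact Or.inr ⟨hs ▸ vertex_eq_zero_or_one _ _, hs' ▸ vertex_eq_zero_or_one _ _⟩

variable (α) in
/-- The set of points of the Cayley tree of the free group on `α`. -/
def cayleyTree : Set (CayleyEdge α → ℝ) := {v | ∃ ε, ∃ s ∈ Icc (0 : ℝ) 1, edgePoint ε s = v}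

variable (α) in
/-- The Cayley tree of the free group on `α`, as a topological space. -/
abbrev CayleyTree := ↥(cayleyTree α)

lemma edgePoint_mem {ε : CayleyEdge α} {s : ℝ} (hs : s ∈ Icc (0 : ℝ) 1) :
    edgePoint ε s ∈ cayleyTree α := ⟨ε, s, hs, rfl⟩

lemma coord_mem_Icc {v : CayleyEdge α → ℝ} (hv : v ∈ cayleyTree α) (ε : CayleyEdge α) :
    v ε ∈ Icc (0 : ℝ) 1 := by
  obtain ⟨ε', s, hs, rfl⟩ := hv
  by_cases h : ε = ε'
  · simpa [h] using hs
  · rw [edgePoint_of_ne h]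
    rcases vertex_eq_zero_or_one ε'.1 ε with h | h <;> simp [h]

@[fun_prop]
lemma continuous_coord (ε : CayleyEdge α) : Continuous fun v : CayleyTree α => v.1 ε :=
  (continuous_apply ε).comp continuous_subtype_val

/-- Left translation of the coordinates of a point of the Cayley tree. -/
def translate (k : FreeGroup α) (v : CayleyEdge α → ℝ) : CayleyEdge α → ℝ :=
  fun ε => v (k⁻¹ * ε.1, ε.2)

lemma translate_vertex (k g : FreeGroup α) : translate k (vertex g) = vertex (k * g) := by
  funext ε
  classical
  exact if_congr (by simp [mul_assoc]) rfl rfl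

lemma translate_edgePoint (k : FreeGroup α) (ε : CayleyEdge α) (s : ℝ) :
    translate k (edgePoint ε s) = edgePoint (k * ε.1, ε.2) s := by
  funext ε'
  by_cases h : ε' = (k * ε.1, ε.2)
  · subst h; simp [translate]
  · have : (k⁻¹ * ε'.1, ε'.2) ≠ ε := fun h' => h (by simp [← h'])
    rw [edgePoint_of_ne h, ← translate_vertex, translate, edgePoint_of_ne this, translate]

instance : MulAction (FreeGroup α) (CayleyTree α) where
  smul k v := ⟨translate k v.1, by
    obtain ⟨_, ε, s, hs, rfl⟩ := v
    exact translate_edgePoint k ε s ▸ edgePoint_mem hs⟩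
  one_smul v := Subtype.ext <| funext fun ε => by change v.1 _ = _; simp
  mul_smul k l v := Subtype.ext <| funext fun ε => by change v.1 _ = v.1 _; simp [mul_assoc]

lemma coe_smul (k : FreeGroup α) (v : CayleyTree α) : (k • v).1 = translate k v.1 := rfl

instance : ContinuousConstSMul (FreeGroup α) (CayleyTree α) where
  continuous_const_smul k :=
    (continuous_pi fun ε : CayleyEdge α => continuous_coord (k⁻¹ * ε.1, ε.2)).subtype_mk _

/-- The open ball of radius `r ≤ 1` about the vertex `g` of the Cayley tree. -/
def vertexBall (g : FreeGroup α) (r : ℝ) : Set (CayleyTree α) :=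
  {v | ∀ a, v.1 (g, a) < r ∧ 1 - r < v.1 (g * (of a)⁻¹, a)}

lemma isOpen_vertexBall [Finite α] (g : FreeGroup α) (r : ℝ) : IsOpen (vertexBall g r) := by
  simp only [vertexBall, ofPred_forall, ofPred_and]
  exact isOpen_iInter_of_finite fun a =>
    (isOpen_lt (by fun_prop) continuous_const).inter (isOpen_lt continuous_const (by fun_prop))

lemma vertexBall_mono {g : FreeGroup α} {r r' : ℝ} (h : r ≤ r') :
    vertexBall g r ⊆ vertexBall g r' :=
  fun _ hv a => ⟨(hv a).1.trans_le h, (sub_le_sub_left h 1).trans_lt (hv a).2⟩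

lemma mem_vertexBall {v : CayleyTree α} {g : FreeGroup α} (hv : v.1 = vertex g) {r : ℝ}
    (hr : 0 < r) : v ∈ vertexBall g r := fun a => by
  rw [hv, vertex_fst (g, a), vertex_mul_of_inv]
  exact ⟨hr, by linarith⟩

lemma eq_or_mul_of_eq_of_mem_vertexBall {v : CayleyTree α} {g : FreeGroup α}
    (hv : v ∈ vertexBall g 1) {ε : CayleyEdge α} {s : ℝ} (h : edgePoint ε s = v.1) :
    ε.1 = g ∨ ε.1 * of ε.2 = g := by
  by_contra! hne
  rcases exists_vertex_eq_of_ne hne.1.symm with ⟨a, ha⟩ | ⟨a, ha⟩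
  · have hlt := (hv a).1
    rw [← h, edgePoint_of_ne (fun h' => hne.1 (congrArg Prod.fst h').symm), ha] at hlt
    exact lt_irrefl _ hlt
  · have hlt := (hv a).2
    rw [← h, edgePoint_of_ne (fun h' => hne.2 (by simp [← h'])), ha, sub_self] at hlt
    exact lt_irrefl _ hlt

lemma smul_mem_vertexBall_iff {k g : FreeGroup α} {r : ℝ} {v : CayleyTree α} :
    k • v ∈ vertexBall g r ↔ v ∈ vertexBall (k⁻¹ * g) r := by
  simp only [vertexBall, mem_ofPred_eq, coe_smul, translate, mul_assoc]

lemma eq_of_mem_vertexBall {v : CayleyTree α} {g h : FreeGroup α} (hg : v ∈ vertexBall g (1 / 2))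
    (hh : v ∈ vertexBall h (1 / 2)) : g = h := by
  obtain ⟨ε, s, -, hv⟩ := v.2
  have hg' := eq_or_mul_of_eq_of_mem_vertexBall (vertexBall_mono (by norm_num) hg) hv
  have hh' := eq_or_mul_of_eq_of_mem_vertexBall (vertexBall_mono (by norm_num) hh) hv
  have hlo : ∀ {k}, v ∈ vertexBall k (1 / 2) → ε.1 = k → s < 1 / 2 := fun hk e => by
    simpa [← e, ← hv] using (hk ε.2).1
  have hhi : ∀ {k}, v ∈ vertexBall k (1 / 2) → ε.1 * of ε.2 = k → 1 - 1 / 2 < s := fun hk e => by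
    simpa [← e, ← hv] using (hk ε.2).2
  rcases hg' with hgv | hgv <;> rcases hh' with hhv | hhv
  · exact hgv.symm.trans hhv
  · linarith [hlo hg hgv, hhi hh hhv]
  · linarith [hhi hg hgv, hlo hh hhv]
  · exact hgv.symm.trans hhv

/-- The interior of the edge `ε` of the Cayley tree. -/
def openEdge (ε : CayleyEdge α) : Set (CayleyTree α) := {v | 0 < v.1 ε ∧ v.1 ε < 1}

lemma isOpen_openEdge (ε : CayleyEdge α) : IsOpen (openEdge ε) :=
  (isOpen_lt continuous_const (continuous_coord ε)).inter
    (isOpen_lt (continuous_coord ε) continuous_const)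

lemma eq_of_edgePoint_mem_openEdge {v : CayleyTree α} {ε ε' : CayleyEdge α} {s : ℝ}
    (hv : edgePoint ε' s = v.1) (hε : v ∈ openEdge ε) : ε' = ε := by
  by_contra hne
  simp only [openEdge, mem_ofPred_eq, ← hv, edgePoint_of_ne (Ne.symm hne)] at hε
  rcases vertex_eq_zero_or_one ε'.1 ε with e | e <;> simp [e] at hε

lemma eq_of_mem_openEdge {v : CayleyTree α} {ε ε' : CayleyEdge α} (h : v ∈ openEdge ε)
    (h' : v ∈ openEdge ε') : ε = ε' := by
  obtain ⟨_, _, -, hv⟩ := v.2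
  exact (eq_of_edgePoint_mem_openEdge hv h).symm.trans (eq_of_edgePoint_mem_openEdge hv h')

lemma smul_mem_openEdge_iff {k : FreeGroup α} {ε : CayleyEdge α} {v : CayleyTree α} :
    k • v ∈ openEdge ε ↔ v ∈ openEdge (k⁻¹ * ε.1, ε.2) := Iff.rfl

lemma mem_vertexBall_or_mem_openEdge (v : CayleyTree α) :
    (∃ g, ∀ r > 0, v ∈ vertexBall g r) ∨ ∃ ε, v ∈ openEdge ε := by
  obtain ⟨ε, s, hs, hv⟩ := v.2
  by_cases hs' : s = 0 ∨ s = 1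
  · obtain ⟨g, hg, -⟩ := edgePoint_eq_or_eq_vertex (ε := ε) hs'
    exact Or.inl ⟨g, fun r hr => mem_vertexBall (hv.symm.trans hg) hr⟩
  · refine Or.inr ⟨ε, ?_⟩
    rw [not_or] at hs'
    rw [openEdge, mem_ofPred_eq, ← hv, edgePoint_self]
    exact ⟨hs.1.lt_of_ne' hs'.1, hs.2.lt_of_ne hs'.2⟩

lemma exists_isOpen_smul_disjoint [Finite α] (v : CayleyTree α) :
    ∃ U, IsOpen U ∧ v ∈ U ∧ ∀ k : FreeGroup α, ((k • ·) '' U ∩ U).Nonempty → k = 1 := by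
  rcases mem_vertexBall_or_mem_openEdge v with ⟨g, hg⟩ | ⟨ε, hε⟩
  · refine ⟨_, isOpen_vertexBall g (1 / 2), hg _ (by norm_num), ?_⟩
    rintro k ⟨_, ⟨w, hw, rfl⟩, hkw⟩
    simpa using eq_of_mem_vertexBall hw (smul_mem_vertexBall_iff.1 hkw)
  · refine ⟨_, isOpen_openEdge ε, hε, ?_⟩
    rintro k ⟨_, ⟨w, hw, rfl⟩, hkw⟩
    simpa using congrArg Prod.fst (eq_of_mem_openEdge hw (smul_mem_openEdge_iff.1 hkw))

variable (α) in
/-- The rose with petals `α`: the quotient of the Cayley tree by the free group. -/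
abbrev Rose := MulAction.orbitRel.Quotient (FreeGroup α) (CayleyTree α)

/-- The universal covering of the rose. -/
def toRose : CayleyTree α → Rose α := Quotient.mk _

lemma isQuotientCoveringMap_toRose [Finite α] :
    IsQuotientCoveringMap (toRose (α := α)) (FreeGroup α) where
  toIsQuotientMap := isQuotientMap_quot_mk
  toContinuousConstSMul := inferInstance
  apply_eq_iff_mem_orbit := Quotient.eq.trans MulAction.orbitRel_apply
  disjoint v := by
    obtain ⟨U, hU, hv, h⟩ := exists_isOpen_smul_disjoint v
    exact ⟨U, hU.mem_nhds hv, h⟩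

/-- The closed edge `ε` of the Cayley tree. -/
def closedEdge (ε : CayleyEdge α) : Set (CayleyTree α) :=
  Subtype.val ⁻¹' (edgePoint ε '' Icc (0 : ℝ) 1)

lemma iUnion_closedEdge : ⋃ ε : CayleyEdge α, closedEdge ε = univ :=
  eq_univ_of_forall fun v => by
    obtain ⟨ε, s, hs, hv⟩ := v.2
    exact mem_iUnion.2 ⟨ε, s, hs, hv⟩

lemma isClosed_closedEdge (ε : CayleyEdge α) : IsClosed (closedEdge ε) :=
  (isCompact_Icc.image (continuous_edgePoint ε)).isClosed.preimage continuous_subtype_val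

lemma locallyFinite_closedEdge [Finite α] : LocallyFinite (closedEdge (α := α)) := by
  intro v
  rcases mem_vertexBall_or_mem_openEdge v with ⟨g, hg⟩ | ⟨ε, hε⟩
  · refine ⟨_, (isOpen_vertexBall g 1).mem_nhds (hg 1 one_pos), ((finite_range fun a : α =>
      ((g, a) : CayleyEdge α)).union (finite_range fun a : α => (g * (of a)⁻¹, a))).subset ?_⟩
    rintro ⟨h, a⟩ ⟨w, ⟨s, -, hw⟩, hw'⟩
    refine (eq_or_mul_of_eq_of_mem_vertexBall hw' hw).imp ?_ ?_
    · rintro rfl; exact ⟨a, rfl⟩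
    · rintro rfl; exact ⟨a, by simp⟩
  · exact ⟨_, (isOpen_openEdge ε).mem_nhds hε,
      (finite_singleton ε).subset fun _ ⟨_, ⟨_, _, hw⟩, hw'⟩ => eq_of_edgePoint_mem_openEdge hw hw'⟩

lemma exists_continuous_of_loops [Finite α] {Y : Type*} [TopologicalSpace Y] {y₀ : Y}
    (φ : α → ℝ → Y) (hφ : ∀ a, Continuous (φ a)) (h₀ : ∀ a, φ a 0 = y₀) (h₁ : ∀ a, φ a 1 = y₀) :
    ∃ j : C(CayleyTree α, Y), ∀ (v : CayleyTree α) (ε : CayleyEdge α), ∀ s ∈ Icc (0 : ℝ) 1,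
      edgePoint ε s = v.1 → j v = φ ε.2 s := by
  choose ε s _ hv using fun v : CayleyTree α => v.2
  have hend : ∀ a s, (s = 0 ∨ s = 1) → φ a s = y₀ := fun a s hs => by
    rcases hs with rfl | rfl; exacts [h₀ a, h₁ a]
  have key : ∀ (v : CayleyTree α) (ε' : CayleyEdge α), ∀ s' ∈ Icc (0 : ℝ) 1,
      edgePoint ε' s' = v.1 → φ (ε v).2 (s v) = φ ε'.2 s' := fun v ε' s' _ hv' => by
    rcases eq_of_edgePoint_eq ((hv v).trans hv'.symm) with ⟨hε, hs⟩ | ⟨hs, hs'⟩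
    · rw [hε, hs]
    · rw [hend _ _ hs, hend _ _ hs']
  refine ⟨⟨fun v => φ (ε v).2 (s v), ?_⟩, key⟩
  refine locallyFinite_closedEdge.continuous iUnion_closedEdge isClosed_closedEdge fun ε' => ?_
  refine ((hφ ε'.2).comp (continuous_coord ε')).continuousOn.congr fun v hvε' => ?_
  obtain ⟨s', hs', hv'⟩ := hvε'
  rw [key v ε' s' hs' hv', Function.comp_apply, ← hv', edgePoint_self]

end CayleyTree

section Contraction

open FreeGroup

variable {α : Type*} [DecidableEq α] {A : Set α}

variable (A) in
/-- The larger distance of the two endpoints of an edge from the free factor spanned by `A`. -/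
noncomputable def edgeDepth (ε : CayleyEdge α) : ℕ :=
  max (depth A ε.1) (depth A (ε.1 * of ε.2))

lemma edgeDepth_eq_zero {ε : CayleyEdge α} :
    edgeDepth A ε = 0 ↔ ε.1 ∈ freeFactor A ∧ ε.2 ∈ A := by
  rw [edgeDepth, Nat.max_eq_zero_iff, depth_eq_zero, depth_eq_zero]
  refine and_congr_right fun h => ?_
  rw [Subgroup.mul_mem_cancel_left _ h, mem_freeFactor_iff]
  simp

lemma edgeDepth_mul_of_mem {h : FreeGroup α} (hh : h ∈ freeFactor A) (ε : CayleyEdge α) :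
    edgeDepth A (h * ε.1, ε.2) = edgeDepth A ε := by
  simp only [edgeDepth, mul_assoc, depth_mul_of_mem hh]

open Classical in
lemma exists_edgePoint_eq_update {ε : CayleyEdge α} (hε : edgeDepth A ε ≠ 0) :
    ∃ w, edgeDepth A ε = depth A w + 1 ∧ (w = ε.1 ∨ w = ε.1 * of ε.2) ∧
      edgePoint ε = Function.update (vertex w) ε := by
  rw [Ne, edgeDepth_eq_zero] at hε
  rcases depth_mul_of hε with h | h
  · exact ⟨ε.1, by rw [edgeDepth, h]; simp, Or.inl rfl, rfl⟩
  · exact ⟨ε.1 * of ε.2, by rw [edgeDepth, h]; simp, Or.inr rfl, funext (edgePoint_eq_update ε)⟩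

lemma exists_edgePoint_eq_vertex {w : FreeGroup α} (hw : w ∉ freeFactor A) :
    ∃ ε, edgeDepth A ε = depth A w ∧ (w = ε.1 ∨ w = ε.1 * of ε.2) ∧
      ∃ s ∈ Icc (0 : ℝ) 1, edgePoint ε s = vertex w := by
  rcases exists_depth_pred hw with ⟨g, b, rfl, h⟩ | ⟨b, h⟩
  · exact ⟨(g, b), by simp [edgeDepth, h], Or.inr rfl, 1, by simp, edgePoint_one _⟩
  · exact ⟨(w, b), by simp [edgeDepth, h], Or.inl rfl, 0, by simp, edgePoint_zero _⟩

lemma vertex_eq_of_mem_freeFactor {w : FreeGroup α} (hw : w ∈ freeFactor A) {ε : CayleyEdge α}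
    (hε : edgeDepth A ε ≠ 0) : vertex w ε = vertex 1 ε := by
  rw [Ne, edgeDepth_eq_zero, not_and] at hε
  have hmul : ∀ x ∈ freeFactor A, ∀ a ∈ A, vertex (x * of a) ε = vertex x ε := fun x hx a ha =>
    vertex_mul_of <| by rintro rfl; exact hε hx ha
  induction hw using Subgroup.closure_induction_right with
  | one => rfl
  | mul_right x hx y hy ih =>
    obtain ⟨a, ha, rfl⟩ := hy
    rw [hmul x hx a ha, ih]
  | mul_inv_cancel x hx y hy ih =>
    obtain ⟨a, ha, rfl⟩ := hy
    have hx' := mul_mem hx (inv_mem (Subgroup.subset_closure ⟨a, ha, rfl⟩))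
    rw [← hmul _ hx' a ha, inv_mul_cancel_right, ih]

lemma vertex_eq_of_depth_lt {w : FreeGroup α} {ε : CayleyEdge α}
    (h : depth A w < edgeDepth A ε) : vertex w ε = vertex 1 ε := by
  induction hn : depth A w generalizing w with
  | zero => exact vertex_eq_of_mem_freeFactor (depth_eq_zero.1 hn) (by omega)
  | succ n ih =>
    have hw : w ∉ freeFactor A := fun h' => by simp [depth_eq_zero.2 h'] at hn
    obtain ⟨ε', hε', -, s, -, hs⟩ := exists_edgePoint_eq_vertex hw
    obtain ⟨w', hw', -, heq⟩ := exists_edgePoint_eq_update (A := A) (ε := ε') (by omega)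
    have hne : ε ≠ ε' := by rintro rfl; omega
    rw [← hs, heq, Function.update_of_ne hne]
    exact ih (by omega) (by omega)

lemma exists_vertex_ne_of_notMem {w : FreeGroup α} (hw : w ∉ freeFactor A) :
    ∃ ε : CayleyEdge α, ε.2 ∉ A ∧ vertex w ε ≠ vertex 1 ε := by
  induction hn : depth A w generalizing w with
  | zero => exact absurd (depth_eq_zero.1 hn) hw
  | succ n ih =>
    obtain ⟨ε, hε, hend, s, -, hs⟩ := exists_edgePoint_eq_vertex hw
    obtain ⟨w', hw', hend', heq⟩ := exists_edgePoint_eq_update (A := A) (ε := ε) (by omega)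
    have hagree : ∀ ε' ≠ ε, vertex w ε' = vertex w' ε' := fun ε' h => by
      rw [← hs, heq, Function.update_of_ne h]
    by_cases hεA : ε.2 ∈ A
    · have hmem : w' ∈ freeFactor A ↔ w ∈ freeFactor A := by
        rcases hend with rfl | rfl <;> rcases hend' with rfl | rfl <;>
          simp [mul_of_mem_freeFactor_iff hεA]
      obtain ⟨ε', hε'A, hne⟩ := ih (mt hmem.1 hw) (by omega)
      exact ⟨ε', hε'A, by rwa [hagree ε' (by rintro rfl; exact hε'A hεA)]⟩
    · refine ⟨ε, hεA, fun he => ?_⟩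
      have hww' : vertex w = vertex w' := funext fun ε' => by
        by_cases h : ε' = ε
        · rw [h, he, vertex_eq_of_depth_lt (A := A) (w := w') (by omega)]
        · exact hagree ε' h
      rw [vertex_injective hww'] at hε
      omega

variable (A) in
/-- The union of the edges of the Cayley tree that are labelled by a letter in `A`. -/
def labelledEdges : Set (CayleyTree α) :=
  {v | ∃ ε : CayleyEdge α, ε.2 ∈ A ∧ ∃ s ∈ Icc (0 : ℝ) 1, edgePoint ε s = v.1}

variable (A) in
/-- The Cayley tree of the free factor spanned by `A`, as a subtree of the Cayley tree. It consists
of the points of `labelledEdges A` that no edge with a label outside `A` separates from `1`. -/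
def subtree : Set (CayleyTree α) :=
  {v ∈ labelledEdges A | ∀ ε : CayleyEdge α, ε.2 ∉ A → v.1 ε = vertex 1 ε}

lemma mem_subtree_iff {v : CayleyTree α} {ε : CayleyEdge α} (hε : ε.2 ∈ A) {s : ℝ}
    (hs : s ∈ Icc (0 : ℝ) 1) (hv : edgePoint ε s = v.1) :
    v ∈ subtree A ↔ ε.1 ∈ freeFactor A := by
  have hcoord : ∀ ε' : CayleyEdge α, ε'.2 ∉ A → v.1 ε' = vertex ε.1 ε' := fun ε' hε' => by
    rw [← hv, edgePoint_of_ne (by rintro rfl; exact hε' hε)]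
  refine ⟨fun h => ?_, fun h => ⟨⟨ε, hε, s, hs, hv⟩, fun ε' hε' => ?_⟩⟩
  · by_contra hmem
    obtain ⟨ε', hε', hne⟩ := exists_vertex_ne_of_notMem hmem
    exact hne ((hcoord ε' hε').symm.trans (h.2 ε' hε'))
  · rw [hcoord ε' hε']
    exact vertex_eq_of_mem_freeFactor h (mt edgeDepth_eq_zero.1 fun h' => hε' h'.2)

lemma mem_freeFactor_of_smul_mem_subtree {v : CayleyTree α} {k : FreeGroup α}
    (hv : v ∈ subtree A) (hkv : k • v ∈ subtree A) : k ∈ freeFactor A := by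
  obtain ⟨ε, hε, s, hs, he⟩ := hv.1
  rw [mem_subtree_iff hε hs he] at hv
  rw [mem_subtree_iff (ε := (k * ε.1, ε.2)) hε hs (by rw [coe_smul, ← he, translate_edgePoint])]
    at hkv
  exact (Subgroup.mul_mem_cancel_right _ hv).1 hkv

lemma subset_subtree_of_isPreconnected {S : Set (CayleyTree α)} (hS : IsPreconnected S)
    (hSA : S ⊆ labelledEdges A) {v : CayleyTree α} (hvS : v ∈ S) (hv : v ∈ subtree A) :
    S ⊆ subtree A := by
  refine fun w hw => ⟨hSA hw, fun ε hε => ?_⟩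
  rw [← hv.2 ε hε]
  have hdiscrete : (fun v : CayleyTree α => v.1 ε) '' S ⊆ {0, 1} := by
    rintro _ ⟨u, hu, rfl⟩
    obtain ⟨ε', hε', s, -, he⟩ := hSA hu
    dsimp only
    rw [← he, edgePoint_of_ne (by rintro rfl; exact hε hε')]
    exact vertex_eq_zero_or_one _ _
  exact (toFinite {0, 1}).countable.isTotallyDisconnected _ hdiscrete
    (hS.image _ (continuous_coord ε).continuousOn) ⟨w, hw, rfl⟩ ⟨v, hvS, rfl⟩

/-- The factor, at time `t`, by which the contraction of the Cayley tree onto a subtree shortens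
an edge of depth `n`. It stays `1` until time `1 / (n + 1)` and vanishes from time `1 / n` on, so
that an edge only starts to shrink once all deeper ones have disappeared. -/
noncomputable def contractRadius (t : ℝ) (n : ℕ) : ℝ :=
  projIcc (0 : ℝ) 1 zero_le_one ((n + 1) * (1 - t * n))

lemma contractRadius_eq_zero {t : ℝ} {n : ℕ} (h : 1 ≤ t * n) : contractRadius t n = 0 := by
  have : (n + 1 : ℝ) * (1 - t * n) ≤ 0 :=
    mul_nonpos_of_nonneg_of_nonpos (by positivity) (by linarith)
  rw [contractRadius, projIcc_of_le_left zero_le_one this]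

lemma contractRadius_eq_one {t : ℝ} {n : ℕ} (h : t * (n + 1) ≤ 1) : contractRadius t n = 1 := by
  have : 1 ≤ (n + 1 : ℝ) * (1 - t * n) := by nlinarith [n.cast_nonneg (α := ℝ)]
  rw [contractRadius, projIcc_of_right_le zero_le_one this]

lemma contractRadius_zero (t : ℝ) : contractRadius t 0 = 1 := by
  simp [contractRadius]

lemma continuous_contractRadius (n : ℕ) : Continuous fun t => contractRadius t n :=
  continuous_subtype_val.comp (continuous_projIcc.comp (by fun_prop))

variable (A) in
/-- The contraction of the Cayley tree onto the subtree of the free factor spanned by `A`, at time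
`t`: each coordinate is clamped to distance `contractRadius t n` from its value at the vertex `1`,
where `n` is the depth of the edge. -/
noncomputable def contract (t : ℝ) (v : CayleyEdge α → ℝ) : CayleyEdge α → ℝ := fun ε =>
  max (vertex 1 ε - contractRadius t (edgeDepth A ε))
    (min (vertex 1 ε + contractRadius t (edgeDepth A ε)) (v ε))

lemma contract_apply_mem_Icc {v : CayleyEdge α → ℝ} {ε : CayleyEdge α} (t : ℝ)
    (hv : v ε ∈ Icc (0 : ℝ) 1) : contract A t v ε ∈ Icc (0 : ℝ) 1 := by
  have hr : 0 ≤ contractRadius t (edgeDepth A ε) := (projIcc _ _ _ _).2.1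
  unfold contract
  rcases vertex_eq_zero_or_one 1 ε with h | h <;> rw [h]
  · exact ⟨le_max_of_le_right (le_min (by linarith) hv.1),
      max_le (by linarith) (min_le_of_right_le hv.2)⟩
  · exact ⟨le_max_of_le_right (le_min (by linarith) hv.1),
      max_le (by linarith) (min_le_of_right_le hv.2)⟩

lemma contract_apply_of_eq {t : ℝ} {v : CayleyEdge α → ℝ} {ε : CayleyEdge α}
    (h : v ε = vertex 1 ε) : contract A t v ε = v ε := by
  have hr : 0 ≤ contractRadius t (edgeDepth A ε) := (projIcc _ _ _ _).2.1
  rw [contract, h, min_eq_right (by linarith), max_eq_right (by linarith)]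

lemma contract_apply_of_radius_eq_zero {t : ℝ} {ε : CayleyEdge α}
    (h : contractRadius t (edgeDepth A ε) = 0) (v : CayleyEdge α → ℝ) :
    contract A t v ε = vertex 1 ε := by
  rw [contract, h, sub_zero, add_zero, max_eq_left (min_le_left _ _)]

lemma contract_apply_of_radius_eq_one {t : ℝ} {v : CayleyEdge α → ℝ} {ε : CayleyEdge α}
    (h : contractRadius t (edgeDepth A ε) = 1) (hv : v ε ∈ Icc (0 : ℝ) 1) :
    contract A t v ε = v ε := by
  rcases vertex_eq_zero_or_one 1 ε with h' | h' <;> rw [contract, h, h'] <;>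
    rw [min_eq_right (by linarith [hv.2]), max_eq_right (by linarith [hv.1])]

lemma contract_zero {v : CayleyEdge α → ℝ} (hv : v ∈ cayleyTree α) : contract A 0 v = v :=
  funext fun ε =>
    contract_apply_of_radius_eq_one (contractRadius_eq_one (by simp)) (coord_mem_Icc hv ε)

open Classical in
lemma contract_update (t : ℝ) (v : CayleyEdge α → ℝ) (ε : CayleyEdge α) (s : ℝ) :
    contract A t (Function.update v ε s) =
      Function.update (contract A t v) ε (contract A t (fun _ => s) ε) := by
  funext ε'
  by_cases h : ε' = ε
  · subst h; simp [contract]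
  · simp [contract, h]

lemma contract_vertex_of_le {t : ℝ} {w : FreeGroup α} (ht : 0 ≤ t) (h : t * (depth A w + 1) ≤ 1) :
    contract A t (vertex w) = vertex w := funext fun ε => by
  rcases lt_or_ge (depth A w) (edgeDepth A ε) with hlt | hle
  · exact contract_apply_of_eq (vertex_eq_of_depth_lt hlt)
  · refine contract_apply_of_radius_eq_one (contractRadius_eq_one (h.trans' ?_)) ?_
    · gcongr
    · rcases vertex_eq_zero_or_one w ε with e | e <;> simp [e]

/-- An edge of positive depth either has shrunk to its endpoint nearer to the free factor, or the
image of that endpoint has not moved yet. -/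
lemma contract_edgePoint_mem_of_forall {t : ℝ} (ht : 0 ≤ t) {ε : CayleyEdge α}
    (hε : edgeDepth A ε ≠ 0)
    (ih : ∀ w, depth A w < edgeDepth A ε → contract A t (vertex w) ∈ cayleyTree α) {s : ℝ}
    (hs : s ∈ Icc (0 : ℝ) 1) : contract A t (edgePoint ε s) ∈ cayleyTree α := by
  classical
  obtain ⟨w, hw, -, heq⟩ := exists_edgePoint_eq_update hε
  rw [heq, contract_update]
  rcases le_total 1 (t * (depth A w + 1)) with h | h
  · have hr : contractRadius t (edgeDepth A ε) = 0 := contractRadius_eq_zero (by simpa [hw] using h)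
    rw [contract_apply_of_radius_eq_zero hr,
      ← contract_apply_of_radius_eq_zero hr (vertex w), Function.update_eq_self]
    exact ih w (by omega)
  · rw [contract_vertex_of_le ht h, ← heq]
    exact edgePoint_mem (contract_apply_mem_Icc t hs)

lemma contract_eq_self {t : ℝ} {v : CayleyEdge α → ℝ} (hv : v ∈ cayleyTree α)
    (h : ∀ ε, edgeDepth A ε ≠ 0 → v ε = vertex 1 ε) : contract A t v = v := funext fun ε => by
  by_cases hε : edgeDepth A ε = 0
  · exact contract_apply_of_radius_eq_one (hε ▸ contractRadius_zero t) (coord_mem_Icc hv ε)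
  · exact contract_apply_of_eq (h ε hε)

lemma contract_edgePoint_of_edgeDepth_eq_zero {ε : CayleyEdge α} (hε : edgeDepth A ε = 0) {s : ℝ}
    (hs : s ∈ Icc (0 : ℝ) 1) (t : ℝ) : contract A t (edgePoint ε s) = edgePoint ε s :=
  contract_eq_self (edgePoint_mem hs) fun ε' hε' => by
    rw [edgePoint_of_ne (by rintro rfl; exact hε' hε)]
    exact vertex_eq_of_mem_freeFactor (edgeDepth_eq_zero.1 hε).1 hε'

lemma contract_of_mem_subtree {v : CayleyTree α} (hv : v ∈ subtree A) (t : ℝ) :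
    contract A t v.1 = v.1 := by
  obtain ⟨ε, hε, s, hs, he⟩ := hv.1
  exact he ▸ contract_edgePoint_of_edgeDepth_eq_zero
    (edgeDepth_eq_zero.2 ⟨(mem_subtree_iff hε hs he).1 hv, hε⟩) hs t

lemma vertex_mem [Nonempty α] (w : FreeGroup α) : vertex w ∈ cayleyTree α :=
  edgePoint_zero (w, Classical.arbitrary α) ▸ edgePoint_mem (by simp)

lemma contract_vertex_mem [Nonempty α] {t : ℝ} (ht : 0 ≤ t) (w : FreeGroup α) :
    contract A t (vertex w) ∈ cayleyTree α := by
  induction hn : depth A w using Nat.strong_induction_on generalizing w with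
  | _ n ih =>
    by_cases hw : w ∈ freeFactor A
    · rw [contract_eq_self (vertex_mem w) fun ε hε => vertex_eq_of_mem_freeFactor hw hε]
      exact vertex_mem w
    · obtain ⟨ε, hε, -, s, hs, heq⟩ := exists_edgePoint_eq_vertex hw
      rw [← depth_eq_zero] at hw
      exact heq ▸ contract_edgePoint_mem_of_forall ht (by omega)
        (fun w' hw' => ih _ (by omega) w' rfl) hs

lemma contract_mem {t : ℝ} (ht : 0 ≤ t) {v : CayleyEdge α → ℝ} (hv : v ∈ cayleyTree α) :
    contract A t v ∈ cayleyTree α := by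
  obtain ⟨ε, s, hs, rfl⟩ := hv
  have : Nonempty α := ⟨ε.2⟩
  by_cases hε : edgeDepth A ε = 0
  · rw [contract_edgePoint_of_edgeDepth_eq_zero hε hs]
    exact edgePoint_mem hs
  · exact contract_edgePoint_mem_of_forall ht hε (fun w _ => contract_vertex_mem ht w) hs

lemma contract_translate {h : FreeGroup α} (hh : h ∈ freeFactor A) {v : CayleyEdge α → ℝ}
    (hv : v ∈ cayleyTree α) (t : ℝ) :
    contract A t (translate h v) = translate h (contract A t v) := funext fun ε => by
  have hdepth : edgeDepth A (h⁻¹ * ε.1, ε.2) = edgeDepth A ε :=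
    edgeDepth_mul_of_mem (inv_mem hh) ε
  by_cases hε : edgeDepth A ε = 0
  · have hr : contractRadius t (edgeDepth A ε) = 1 := hε ▸ contractRadius_zero t
    exact (contract_apply_of_radius_eq_one (v := translate h v) hr (coord_mem_Icc hv _)).trans
      (contract_apply_of_radius_eq_one (hdepth ▸ hr) (coord_mem_Icc hv _)).symm
  · have hv1 : vertex 1 (h⁻¹ * ε.1, ε.2) = vertex 1 ε := by
      rw [← vertex_eq_of_mem_freeFactor hh hε, ← mul_one h, ← translate_vertex, translate,
        mul_one]
    simp only [contract, translate, hdepth, hv1]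

lemma contract_one_mem_subtree (hA : A.Nonempty) {v : CayleyTree α}
    (hv : contract A 1 v.1 ∈ cayleyTree α) : ⟨contract A 1 v.1, hv⟩ ∈ subtree A := by
  have hcoord : ∀ ε, edgeDepth A ε ≠ 0 → contract A 1 v.1 ε = vertex 1 ε := fun ε hε =>
    contract_apply_of_radius_eq_zero
      (contractRadius_eq_zero (by simpa using Nat.one_le_iff_ne_zero.2 hε)) _
  have hoff : ∀ ε : CayleyEdge α, ε.2 ∉ A → contract A 1 v.1 ε = vertex 1 ε := fun ε hε =>
    hcoord ε fun h => hε (edgeDepth_eq_zero.1 h).2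
  refine ⟨?_, hoff⟩
  obtain ⟨ε, s, hs, he⟩ := hv
  by_cases hε : ε.2 ∈ A
  · exact ⟨ε, hε, s, hs, he⟩
  · have hs' : s = 0 ∨ s = 1 := by
      rw [← edgePoint_self ε s, he, hoff ε hε]
      exact vertex_eq_zero_or_one 1 ε
    obtain ⟨g, hg, -⟩ := edgePoint_eq_or_eq_vertex (ε := ε) hs'
    obtain ⟨a, ha⟩ := hA
    exact ⟨(g, a), ha, 0, by simp, (edgePoint_zero (g, a)).trans (hg.symm.trans he)⟩

lemma continuous_contract :
    Continuous fun p : unitInterval × CayleyTree α => contract A p.1 p.2.1 := by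
  refine continuous_pi fun ε => ?_
  have := (continuous_contractRadius (edgeDepth A ε)).comp
    (continuous_subtype_val.comp (continuous_fst (X := unitInterval) (Y := CayleyTree α)))
  exact (continuous_const.sub this).max
    ((continuous_const.add this).min ((continuous_coord ε).comp continuous_snd))

variable (A) in
/-- The contraction of the Cayley tree onto the subtree of the free factor spanned by `A`, as a
homotopy of self-maps of the tree. -/
noncomputable def contraction : C(unitInterval × CayleyTree α, CayleyTree α) :=
  ⟨fun p => ⟨contract A p.1 p.2.1, contract_mem p.1.2.1 p.2.2⟩,
    continuous_contract.subtype_mk _⟩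

lemma contraction_zero (v : CayleyTree α) : contraction A (0, v) = v :=
  Subtype.ext (contract_zero v.2)

lemma contraction_one_mem (hA : A.Nonempty) (v : CayleyTree α) :
    contraction A (1, v) ∈ subtree A :=
  contract_one_mem_subtree hA _

lemma contraction_of_mem_subtree {v : CayleyTree α} (hv : v ∈ subtree A) (t : unitInterval) :
    contraction A (t, v) = v :=
  Subtype.ext (contract_of_mem_subtree hv t)

lemma contraction_smul {h : FreeGroup α} (hh : h ∈ freeFactor A) (t : unitInterval)
    (v : CayleyTree α) : contraction A (t, h • v) = h • contraction A (t, v) :=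
  Subtype.ext (contract_translate hh v.2 t)

end Contraction

section Coordinates

/-- The parametrisation of the Möbius band, as a subspace of `ℂ × ℂ`, by the strip `ℝ × [-1, 1]`.
The origin corresponds to the centre `(1/2, 0)` of the removed disc. -/
noncomputable def mobiusCoord (p : ℝ × ℝ) : ℂ × ℂ :=
  (Complex.exp (2 * Real.pi * p.1 * Complex.I), p.2 * Complex.exp (Real.pi * p.1 * Complex.I))

@[fun_prop]
lemma continuous_mobiusCoord : Continuous mobiusCoord := by
  unfold mobiusCoord
  fun_prop

lemma mobiusCoord_add_intCast (u v : ℝ) (n : ℤ) :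
    mobiusCoord (u + n, v) = mobiusCoord (u, (-1) ^ n * v) := by
  refine Prod.ext (Complex.exp_eq_exp_iff_exists_int.2 ⟨n, by push_cast; ring⟩) ?_
  have hexp : Complex.exp (Real.pi * (u + n : ℝ) * Complex.I) =
      (-1) ^ n * Complex.exp (Real.pi * u * Complex.I) := by
    rw [← Complex.exp_pi_mul_I, ← Complex.exp_int_mul, ← Complex.exp_add]
    push_cast
    ring_nf
  simp only [mobiusCoord, hexp]
  push_cast
  ring

lemma mobiusCoord_add_one (u v : ℝ) : mobiusCoord (u + 1, v) = mobiusCoord (u, -v) := by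
  simpa using mobiusCoord_add_intCast u v 1

lemma mobiusCoord_sub_one (u v : ℝ) : mobiusCoord (u - 1, v) = mobiusCoord (u, -v) := by
  rw [← neg_neg v, ← mobiusCoord_add_one, sub_add_cancel, neg_neg]

lemma eq_of_mobiusCoord_eq {p q : ℝ × ℝ} (h : mobiusCoord p = mobiusCoord q) :
    ∃ n : ℤ, q.1 = p.1 + n ∧ p.2 = (-1) ^ n * q.2 := by
  obtain ⟨n, hn⟩ := Complex.exp_eq_exp_iff_exists_int.1 (congrArg Prod.fst h.symm)
  have hq : q.1 = p.1 + n := by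
    have := mul_left_cancel₀ (b := (q.1 : ℂ)) (c := p.1 + n) Complex.two_pi_I_ne_zero
      (by linear_combination hn)
    exact_mod_cast this
  refine ⟨n, hq, ?_⟩
  have h' : mobiusCoord p = mobiusCoord (p.1, (-1) ^ n * q.2) := by
    rw [h, ← mobiusCoord_add_intCast, ← hq]
  exact_mod_cast mul_right_cancel₀ (Complex.exp_ne_zero _) (congrArg Prod.snd h')

lemma norm_mobiusCoord_snd (p : ℝ × ℝ) : ‖(mobiusCoord p).2‖ = |p.2| := by
  simp [mobiusCoord, Complex.norm_exp]

lemma re_mobiusCoord_fst (p : ℝ × ℝ) : (mobiusCoord p).1.re = Real.cos (2 * Real.pi * p.1) := by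
  rw [mobiusCoord, ← Complex.exp_ofReal_mul_I_re]
  push_cast
  rfl

/-- The centre of the removed disc. -/
noncomputable def discCentre : ℝ × ℝ := (1 / 2, 0)

lemma mobiusCoord_eq_of_rel {p q : Sq} (h : rel p q) :
    mobiusCoord (p.1 - discCentre) = mobiusCoord (q.1 - discCentre) := by
  obtain ⟨⟨⟨x, y⟩, _⟩, ⟨⟨x', y'⟩, _⟩⟩ := p, q
  simp only [discCentre, Prod.mk_sub_mk]
  rcases h with h | ⟨h₁, h₂, h₃⟩ | ⟨h₁, h₂, h₃⟩
  · cases h; rfl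
  · obtain ⟨rfl, rfl, rfl⟩ : x = 0 ∧ x' = 1 ∧ y = -y' := ⟨h₁, h₂, h₃⟩
    rw [show (1 - 1 / 2 : ℝ) = 0 - 1 / 2 + 1 by ring, mobiusCoord_add_one]
    simp
  · obtain ⟨rfl, rfl, rfl⟩ : x = 1 ∧ x' = 0 ∧ y' = -y := ⟨h₁, h₂, h₃⟩
    rw [show (1 - 1 / 2 : ℝ) = 0 - 1 / 2 + 1 by ring, mobiusCoord_add_one]
    simp

/-- The embedding of the Möbius band into `ℂ × ℂ`. -/
noncomputable def complexCoord : M → ℂ × ℂ :=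
  Quot.lift (fun p : Sq => mobiusCoord (p.1 - discCentre)) fun _ _ => mobiusCoord_eq_of_rel

lemma complexCoord_qm (p : Sq) : complexCoord (qm p) = mobiusCoord (p.1 - discCentre) := rfl

@[fun_prop]
lemma continuous_complexCoord : Continuous complexCoord :=
  continuous_quot_lift _ (by fun_prop)

lemma complexCoord_injective : Function.Injective complexCoord := by
  rintro ⟨⟨x, y⟩, hx, hy⟩ ⟨⟨x', y'⟩, hx', hy'⟩ h
  obtain ⟨n, hn, hy₂⟩ := eq_of_mobiusCoord_eq h
  simp only [discCentre, Prod.mk_sub_mk, sub_zero, mem_Icc] at hn hy₂ hx hx'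
  have hn₁ : n ≤ 1 := by exact_mod_cast (by linarith : (n : ℝ) ≤ 1)
  have hn₂ : -1 ≤ n := by exact_mod_cast (by linarith : (-1 : ℝ) ≤ n)
  refine Quot.sound ?_
  obtain rfl | rfl | rfl : n = -1 ∨ n = 0 ∨ n = 1 := by omega
  · norm_num at hn hy₂
    exact Or.inr (Or.inr ⟨by dsimp only; linarith, by dsimp only; linarith, by simp [hy₂]⟩)
  · norm_num at hn hy₂
    exact Or.inl (by simp [hn, hy₂])
  · norm_num at hn hy₂
    exact Or.inr (Or.inl ⟨by dsimp only; linarith, by dsimp only; linarith, hy₂⟩)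

instance : CompactSpace Sq := isCompact_iff_compactSpace.1 (isCompact_Icc.prod isCompact_Icc)

instance : CompactSpace M := inferInstanceAs (CompactSpace (Quot rel))

lemma exists_complexCoord_eq {p : ℝ × ℝ} (hp : |p.2| ≤ 1) :
    ∃ m, complexCoord m = mobiusCoord p := by
  obtain ⟨u, v⟩ := p
  rw [abs_le] at hp
  have hv : (-1) ^ ⌊u + 1 / 2⌋ * v ∈ Icc (-1 : ℝ) 1 := by
    rcases Int.even_or_odd ⌊u + 1 / 2⌋ with h | h <;> rw [h.neg_one_zpow] <;>
      constructor <;> linarith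
  refine ⟨qm ⟨(Int.fract (u + 1 / 2), _), ⟨Int.fract_nonneg _, (Int.fract_lt_one _).le⟩, hv⟩, ?_⟩
  rw [complexCoord_qm, discCentre, Prod.mk_sub_mk, sub_zero, ← mobiusCoord_add_intCast, Int.fract]
  congr 2
  ring

/-- The region of `ℂ × ℂ` that avoids the removed disc. -/
def outsideHole : Set (ℂ × ℂ) := {w | 1 / 4 ≤ ‖w.2‖ ∨ w.1.re ≤ 0}

lemma isClosed_outsideHole : IsClosed outsideHole := by
  rw [outsideHole, ofPred_or]
  exact (isClosed_le (by fun_prop) (by fun_prop)).union (isClosed_le (by fun_prop) (by fun_prop))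

lemma cos_two_pi_mul_nonpos_iff {u : ℝ} (hu : |u| ≤ 3 / 4) :
    Real.cos (2 * Real.pi * u) ≤ 0 ↔ 1 / 4 ≤ |u| := by
  have hπ := Real.pi_pos
  have habs : Real.cos (2 * Real.pi * u) = Real.cos (2 * Real.pi * |u|) := by
    rw [← Real.cos_abs, abs_mul, abs_of_pos (by positivity)]
  rw [habs]
  refine ⟨fun h => ?_, fun h =>
    Real.cos_nonpos_of_pi_div_two_le_of_le (by nlinarith) (by nlinarith)⟩
  by_contra! hlt
  exact h.not_gt (Real.cos_pos_of_mem_Ioo ⟨by nlinarith [abs_nonneg u], by nlinarith⟩)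

lemma mobiusCoord_mem_outsideHole_iff {p : ℝ × ℝ} (hp : |p.1| ≤ 3 / 4) :
    mobiusCoord p ∈ outsideHole ↔ 1 / 4 ≤ ‖p‖ := by
  rw [outsideHole, mem_ofPred_eq, norm_mobiusCoord_snd, re_mobiusCoord_fst,
    cos_two_pi_mul_nonpos_iff hp, Prod.norm_def, le_max_iff, Real.norm_eq_abs, Real.norm_eq_abs,
    or_comm]

lemma abs_fst_sub_discCentre_le (p : Sq) : |(p.1 - discCentre).1| ≤ 1 / 2 := by
  have h := p.2.1
  rw [abs_le]
  constructor <;> simp only [discCentre, Prod.fst_sub] <;> linarith [h.1, h.2]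

lemma mem_Xset_iff (m : M) : m ∈ Xset ↔ complexCoord m ∈ outsideHole := by
  have hqm : ∀ p : Sq, complexCoord (qm p) ∈ outsideHole ↔ p.1 ∉ Bdisc := fun p => by
    rw [complexCoord_qm, mobiusCoord_mem_outsideHole_iff
      ((abs_fst_sub_discCentre_le p).trans (by norm_num)), Bdisc, mem_ball_iff_norm, not_lt]
    rfl
  refine ⟨?_, fun h => ?_⟩
  · obtain ⟨p, rfl⟩ := Quot.exists_rep m
    exact fun h => (hqm p).2 fun hp => h ⟨p, hp, rfl⟩
  · rintro ⟨p, hp, rfl⟩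
    exact (hqm p).1 h hp

instance : CompactSpace X := by
  have : Xset = complexCoord ⁻¹' outsideHole := ext mem_Xset_iff
  exact isCompact_iff_compactSpace.1
    (this ▸ isClosed_outsideHole.preimage continuous_complexCoord).isCompact

/-- The embedding of the punctured Möbius band into `ℂ × ℂ`. -/
noncomputable def coord (z : X) : ℂ × ℂ := complexCoord z

lemma coord_injective : Function.Injective coord :=
  complexCoord_injective.comp Subtype.val_injective

@[fun_prop]
lemma continuous_coord_X : Continuous coord := by
  unfold coord
  fun_prop

instance : T2Space X := T2Space.of_injective_continuous coord_injective continuous_coord_X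

lemma mobiusCoord_mem_range_coord {p : ℝ × ℝ} (hp : |p.2| ≤ 1)
    (hp' : mobiusCoord p ∈ outsideHole) : mobiusCoord p ∈ range coord := by
  obtain ⟨m, hm⟩ := exists_complexCoord_eq hp
  exact ⟨⟨m, (mem_Xset_iff m).2 (hm ▸ hp')⟩, hm⟩

lemma exists_mobiusCoord_eq (z : X) :
    ∃ p : ℝ × ℝ, |p.1| ≤ 1 / 2 ∧ |p.2| ≤ 1 ∧ mobiusCoord p = coord z := by
  obtain ⟨p, hp⟩ := Quot.exists_rep z.1
  refine ⟨p.1 - discCentre, abs_fst_sub_discCentre_le p, ?_, congrArg complexCoord hp⟩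
  simpa [discCentre, abs_le] using p.2.2

lemma coord_mem_outsideHole (z : X) : coord z ∈ outsideHole := (mem_Xset_iff z).1 z.2

instance : Nonempty X := by
  obtain ⟨z, -⟩ := mobiusCoord_mem_range_coord (p := (0, 1)) (by simp)
    (Or.inl (by rw [norm_mobiusCoord_snd]; norm_num))
  exact ⟨z⟩

/-- The point of the punctured Möbius band with coordinates `w` in `ℂ × ℂ`, and a junk value if
there is none. -/
noncomputable def ofCoord (w : ℂ × ℂ) : X := Function.invFun coord w

lemma coord_ofCoord {w : ℂ × ℂ} (hw : w ∈ range coord) : coord (ofCoord w) = w :=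
  Function.invFun_eq hw

lemma ofCoord_coord (z : X) : ofCoord (coord z) = z :=
  Function.leftInverse_invFun coord_injective z

lemma continuous_ofCoord {W : Type*} [TopologicalSpace W] {φ : W → ℂ × ℂ} (hφ : Continuous φ)
    (h : ∀ w, φ w ∈ range coord) : Continuous fun w => ofCoord (φ w) := by
  rw [(continuous_coord_X.isClosedEmbedding coord_injective).isInducing.continuous_iff]
  exact hφ.congr fun w => (coord_ofCoord (h w)).symm

end Coordinates

section Height

/-- The distance of a point of the punctured Möbius band from the core circle of the band. -/
noncomputable def height (z : X) : ℝ := ‖(coord z).2‖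

@[fun_prop]
lemma continuous_height : Continuous height := by
  unfold height
  fun_prop

lemma height_eq_abs {z : X} {p : ℝ × ℝ} (h : mobiusCoord p = coord z) : height z = |p.2| := by
  rw [height, ← h, norm_mobiusCoord_snd]

lemma height_le_one (z : X) : height z ≤ 1 := by
  obtain ⟨p, -, hp, h⟩ := exists_mobiusCoord_eq z
  exact height_eq_abs h ▸ hp

lemma mem_C1_iff {z : X} : z ∈ C1 ↔ height z = 1 := by
  have hqm : ∀ p : Sq, qm p = z → height z = |p.1.2| := fun p hp => by
    rw [height_eq_abs (p := p.1 - discCentre) (congrArg complexCoord hp)]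
    simp [discCentre]
  refine ⟨?_, fun h => ?_⟩
  · rintro ⟨p, hp, h⟩
    rw [hqm p hp, abs_eq zero_le_one]
    exact h
  · obtain ⟨p, hp⟩ := Quot.exists_rep z.1
    exact ⟨p, hp, eq_or_eq_neg_of_abs_eq ((hqm p hp).symm.trans h)⟩

lemma mem_C2_iff {z : X} : z ∈ C2 ↔ ∃ p : ℝ × ℝ, ‖p‖ = 1 / 4 ∧ mobiusCoord p = coord z := by
  constructor
  · rintro ⟨p, hp, h⟩
    exact ⟨p.1 - discCentre, mem_sphere_iff_norm.1 h, congrArg complexCoord hp⟩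
  · rintro ⟨p, hp, h⟩
    have h₁ := abs_le.1 ((norm_fst_le p).trans hp.le)
    have h₂ := abs_le.1 ((norm_snd_le p).trans hp.le)
    refine ⟨⟨p + discCentre, ⟨?_, ?_⟩, ?_, ?_⟩, complexCoord_injective ?_, ?_⟩
    · simp only [discCentre, Prod.fst_add]; linarith
    · simp only [discCentre, Prod.fst_add]; linarith
    · simp only [discCentre, Prod.snd_add]; linarith
    · simp only [discCentre, Prod.snd_add]; linarith
    · rw [complexCoord_qm, add_sub_cancel_right]
      exact h
    · refine mem_sphere_iff_norm.2 ?_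
      change ‖p + discCentre - discCentre‖ = 1 / 4
      rw [add_sub_cancel_right, hp]

lemma height_le_of_mem_C2 {z : X} (hz : z ∈ C2) : height z ≤ 1 / 4 := by
  obtain ⟨p, hp, h⟩ := mem_C2_iff.1 hz
  exact height_eq_abs h ▸ (norm_snd_le p).trans hp.le

/-- The factor by which `stretch c` multiplies the second coordinate of a point of height `r`. -/
noncomputable def stretchFactor (c r : ℝ) : ℝ :=
  min 1 (1 / 4 + |c| * (max r (1 / 4) - 1 / 4)) / max r (1 / 4)

lemma stretchFactor_of_le {c r : ℝ} (h : r ≤ 1 / 4) : stretchFactor c r = 1 := by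
  rw [stretchFactor, max_eq_right h]
  norm_num

lemma stretchFactor_mul {c r : ℝ} (h : 1 / 4 ≤ r) :
    stretchFactor c r * r = min 1 (1 / 4 + |c| * (r - 1 / 4)) := by
  rw [stretchFactor, max_eq_left h, div_mul_cancel₀ _ (by linarith)]

lemma stretchFactor_nonneg (c r : ℝ) : 0 ≤ stretchFactor c r := by
  have hr : 1 / 4 ≤ max r (1 / 4) := le_max_right _ _
  have : 0 ≤ |c| * (max r (1 / 4) - 1 / 4) := mul_nonneg (abs_nonneg c) (by linarith)
  exact div_nonneg (le_min zero_le_one (by linarith)) (by linarith)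

lemma continuous_stretchFactor : Continuous fun p : ℝ × ℝ => stretchFactor p.1 p.2 := by
  unfold stretchFactor
  refine Continuous.div (by fun_prop) (by fun_prop) fun p => ne_of_gt ?_
  exact lt_max_of_lt_right (by norm_num)

/-- The coordinates of `stretch c z`. -/
noncomputable def stretchCoord (c : ℝ) (z : X) : ℂ × ℂ :=
  ((coord z).1, stretchFactor c (height z) • (coord z).2)

lemma norm_stretchCoord_snd {c : ℝ} {z : X} (hz : 1 / 4 ≤ height z) :
    ‖(stretchCoord c z).2‖ = min 1 (1 / 4 + |c| * (height z - 1 / 4)) := by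
  rw [stretchCoord, norm_smul, Real.norm_of_nonneg (stretchFactor_nonneg _ _),
    ← stretchFactor_mul hz, height]

lemma stretchCoord_of_height_le {c : ℝ} {z : X} (hz : height z ≤ 1 / 4) :
    stretchCoord c z = coord z := by
  rw [stretchCoord, stretchFactor_of_le hz, one_smul]

lemma stretchCoord_mem_range (c : ℝ) (z : X) : stretchCoord c z ∈ range coord := by
  rcases le_total (height z) (1 / 4) with hz | hz
  · exact ⟨z, (stretchCoord_of_height_le hz).symm⟩
  obtain ⟨p, -, -, hp⟩ := exists_mobiusCoord_eq z
  have heq : mobiusCoord (p.1, stretchFactor c (height z) * p.2) = stretchCoord c z := by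
    rw [stretchCoord, ← hp]
    refine Prod.ext rfl ?_
    simp [mobiusCoord, mul_assoc]
  have hnorm := norm_stretchCoord_snd (c := c) hz
  rw [← heq]
  refine mobiusCoord_mem_range_coord ?_ (Or.inl ?_)
  · rw [← heq, norm_mobiusCoord_snd] at hnorm
    exact hnorm.trans_le (min_le_left _ _)
  · rw [heq, hnorm]
    exact le_min (by norm_num) (by nlinarith [abs_nonneg c])

/-- The self-map of the punctured Möbius band that fixes the points of height at most `1/4` and
multiplies the distance from height `1/4` by `c` elsewhere, up to the maximal height `1`. -/
noncomputable def stretch : C(ℝ × X, X) where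
  toFun p := ofCoord (stretchCoord p.1 p.2)
  continuous_toFun := by
    refine continuous_ofCoord ?_ fun p => stretchCoord_mem_range p.1 p.2
    have : Continuous fun p : ℝ × X => stretchFactor p.1 (height p.2) :=
      continuous_stretchFactor.comp (f := fun p : ℝ × X => (p.1, height p.2)) (by fun_prop)
    unfold stretchCoord
    fun_prop

lemma stretch_of_height_le {c : ℝ} {z : X} (hz : height z ≤ 1 / 4) : stretch (c, z) = z := by
  change ofCoord (stretchCoord c z) = z
  rw [stretchCoord_of_height_le hz, ofCoord_coord]

lemma height_stretch {c : ℝ} {z : X} (hz : 1 / 4 ≤ height z) :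
    height (stretch (c, z)) = min 1 (1 / 4 + |c| * (height z - 1 / 4)) := by
  rw [← norm_stretchCoord_snd hz, height]
  exact congrArg (‖Prod.snd ·‖) (coord_ofCoord (stretchCoord_mem_range c z))

lemma stretch_one (z : X) : stretch (1, z) = z := by
  rcases le_total (height z) (1 / 4) with hz | hz
  · exact stretch_of_height_le hz
  have hfactor : stretchFactor 1 (height z) = 1 := by
    have := stretchFactor_mul (c := 1) hz
    rw [abs_one, one_mul, add_sub_cancel, min_eq_right (height_le_one z)] at this
    exact mul_right_cancel₀ (by linarith) (this.trans (one_mul _).symm)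
  change ofCoord (stretchCoord 1 z) = z
  rw [stretchCoord, hfactor, one_smul, ofCoord_coord]

lemma stretch_mem_C1 {c : ℝ} (hc : 1 ≤ c) {z : X} (hz : z ∈ C1) : stretch (c, z) ∈ C1 := by
  rw [mem_C1_iff] at hz ⊢
  rw [height_stretch (by linarith), hz, min_eq_left]
  linarith [le_abs_self c]

lemma stretch_mem_Bd {c : ℝ} (hc : 1 ≤ c) {z : X} (hz : z ∈ Bd) : stretch (c, z) ∈ Bd :=
  hz.imp (stretch_mem_C1 hc) fun h => (stretch_of_height_le (height_le_of_mem_C2 h)).symm ▸ h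

end Height

section Triangle

/-- The gauge of the triangle with vertices `(-1, -1)`, `(0, 1)` and `(1, -1)`. Together with its
images under the deck transformations `(u, v) ↦ (u + n, (-1) ^ n * v)` this triangle covers the
strip `ℝ × [-1, 1]`. -/
noncomputable def triangleGauge (p : ℝ × ℝ) : ℝ := max (-p.2) (p.2 + 2 * |p.1|)

lemma triangleGauge_le_iff {p : ℝ × ℝ} {c : ℝ} :
    triangleGauge p ≤ c ↔ -p.2 ≤ c ∧ p.2 + 2 * |p.1| ≤ c :=
  max_le_iff

lemma triangleGauge_smul {c : ℝ} (hc : 0 ≤ c) (p : ℝ × ℝ) :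
    triangleGauge (c • p) = c * triangleGauge p := by
  simp only [triangleGauge, Prod.smul_fst, Prod.smul_snd, smul_eq_mul, mul_max_of_nonneg _ _ hc,
    abs_mul, abs_of_nonneg hc]
  congr 1 <;> ring

lemma norm_le_triangleGauge (p : ℝ × ℝ) : ‖p‖ ≤ triangleGauge p := by
  obtain ⟨h₁, h₂⟩ := triangleGauge_le_iff.1 (le_refl (triangleGauge p))
  have := abs_nonneg p.1
  exact max_le (by rw [Real.norm_eq_abs]; linarith) (abs_le.2 ⟨by linarith, by linarith⟩)

lemma triangleGauge_le (p : ℝ × ℝ) : triangleGauge p ≤ 3 * ‖p‖ := by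
  have h₁ : |p.1| ≤ ‖p‖ := norm_fst_le p
  have h₂ := abs_le.1 (norm_snd_le p : |p.2| ≤ ‖p‖)
  exact triangleGauge_le_iff.2 ⟨by linarith [norm_nonneg p], by linarith⟩

/-- The boundary of the triangle, traversed clockwise from `(-1, -1)` as `θ` runs from `0` to `3`,
with one unit of time for each side. -/
noncomputable def trianglePath (θ : ℝ) : ℝ × ℝ :=
  (min (θ - 1) (5 - 2 * θ), max (-1) (min (2 * θ - 1) (3 - 2 * θ)))

@[fun_prop]
lemma continuous_trianglePath : Continuous trianglePath := by
  unfold trianglePath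
  fun_prop

lemma trianglePath_of_mem_Icc_zero_one {θ : ℝ} (hθ : θ ∈ Icc 0 1) :
    trianglePath θ = (θ - 1, 2 * θ - 1) := by
  obtain ⟨h₀, h₁⟩ := hθ
  rw [trianglePath, min_eq_left (by linarith), min_eq_left (by linarith),
    max_eq_right (by linarith)]

lemma trianglePath_of_mem_Icc_one_two {θ : ℝ} (hθ : θ ∈ Icc 1 2) :
    trianglePath θ = (θ - 1, 3 - 2 * θ) := by
  obtain ⟨h₁, h₂⟩ := hθ
  rw [trianglePath, min_eq_left (by linarith), min_eq_right (by linarith),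
    max_eq_right (by linarith)]

lemma trianglePath_of_mem_Icc_two_three {θ : ℝ} (hθ : θ ∈ Icc 2 3) :
    trianglePath θ = (5 - 2 * θ, -1) := by
  obtain ⟨h₂, -⟩ := hθ
  rw [trianglePath, min_eq_right (by linarith), min_eq_right (by linarith),
    max_eq_left (by linarith)]

lemma mem_Icc_zero_three_iff {θ : ℝ} :
    θ ∈ Icc (0 : ℝ) 3 ↔ θ ∈ Icc (0 : ℝ) 1 ∨ θ ∈ Icc (1 : ℝ) 2 ∨ θ ∈ Icc (2 : ℝ) 3 := by
  rw [← mem_union, ← mem_union, Icc_union_Icc_eq_Icc, Icc_union_Icc_eq_Icc] <;> norm_num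

lemma triangleGauge_trianglePath {θ : ℝ} (hθ : θ ∈ Icc 0 3) :
    triangleGauge (trianglePath θ) = 1 := by
  rcases mem_Icc_zero_three_iff.1 hθ with h | h | h
  · rw [trianglePath_of_mem_Icc_zero_one h, triangleGauge, abs_of_nonpos (by linarith [h.2]),
      max_eq_right] <;> linarith [h.1]
  · rw [trianglePath_of_mem_Icc_one_two h, triangleGauge, abs_of_nonneg (by linarith [h.1]),
      max_eq_right] <;> linarith [h.2]
  · have : |5 - 2 * θ| ≤ 1 := abs_le.2 ⟨by linarith [h.2], by linarith [h.1]⟩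
    rw [trianglePath_of_mem_Icc_two_three h, triangleGauge, max_eq_left] <;> linarith

lemma exists_trianglePath_eq {p : ℝ × ℝ} (hp : triangleGauge p = 1) :
    ∃ θ ∈ Icc (0 : ℝ) 3, trianglePath θ = p := by
  obtain ⟨u, v⟩ := p
  obtain ⟨h₁, h₂⟩ := triangleGauge_le_iff.1 hp.le
  dsimp only at h₁ h₂
  have hu := abs_le.1 (show |u| ≤ 1 by linarith)
  rcases max_choice (-v) (v + 2 * |u|) with h | h <;> rw [triangleGauge, h] at hp
  · have hθ : (5 - u) / 2 ∈ Icc (2 : ℝ) 3 := ⟨by linarith, by linarith⟩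
    refine ⟨_, mem_Icc_zero_three_iff.2 (.inr (.inr hθ)), ?_⟩
    rw [trianglePath_of_mem_Icc_two_three hθ]
    exact Prod.ext (by ring) (by linarith)
  · rcases le_total u 0 with hu₀ | hu₀
    · have hθ : u + 1 ∈ Icc (0 : ℝ) 1 := ⟨by linarith, by linarith⟩
      refine ⟨_, mem_Icc_zero_three_iff.2 (.inl hθ), ?_⟩
      rw [abs_of_nonpos hu₀] at hp
      rw [trianglePath_of_mem_Icc_zero_one hθ]
      exact Prod.ext (by ring) (by linarith)
    · have hθ : u + 1 ∈ Icc (1 : ℝ) 2 := ⟨by linarith, by linarith⟩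
      refine ⟨_, mem_Icc_zero_three_iff.2 (.inr (.inl hθ)), ?_⟩
      rw [abs_of_nonneg hu₀] at hp
      rw [trianglePath_of_mem_Icc_one_two hθ]
      exact Prod.ext (by ring) (by linarith)

lemma trianglePath_zero : trianglePath 0 = (-1, -1) := by
  norm_num [trianglePath_of_mem_Icc_zero_one]

lemma trianglePath_three : trianglePath 3 = (-1, -1) := by
  norm_num [trianglePath_of_mem_Icc_two_three]

lemma eq_or_eq_three_of_trianglePath_eq {θ θ' : ℝ} (hθ : θ ∈ Icc 0 3) (hθ' : θ' ∈ Icc 0 3)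
    (hle : θ ≤ θ') (h : trianglePath θ = trianglePath θ') : θ = θ' ∨ θ = 0 ∧ θ' = 3 := by
  rcases mem_Icc_zero_three_iff.1 hθ with h₁ | h₁ | h₁ <;>
  rcases mem_Icc_zero_three_iff.1 hθ' with h₂ | h₂ | h₂ <;>
  simp only [trianglePath_of_mem_Icc_zero_one, trianglePath_of_mem_Icc_one_two,
    trianglePath_of_mem_Icc_two_three, h₁, h₂, Prod.mk.injEq] at h
  all_goals first
    | exact Or.inl (by linarith [h₁.1, h₁.2, h₂.1, h₂.2, h.1, h.2])
    | exact Or.inr ⟨by linarith [h₁.1, h₂.2, h.2], by linarith [h₁.1, h₂.2, h.2]⟩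

lemma one_third_le_norm_trianglePath {θ : ℝ} (hθ : θ ∈ Icc 0 3) : 1 / 3 ≤ ‖trianglePath θ‖ := by
  linarith [triangleGauge_trianglePath hθ, triangleGauge_le (trianglePath θ)]

lemma abs_fst_le_one {p : ℝ × ℝ} (hp : triangleGauge p ≤ 1) : |p.1| ≤ 1 :=
  (norm_fst_le p).trans ((norm_le_triangleGauge p).trans hp)

lemma mobiusCoord_mem_outsideHole {p : ℝ × ℝ} (hp : triangleGauge p ≤ 1) (hp' : 1 / 4 ≤ ‖p‖) :
    mobiusCoord p ∈ outsideHole := by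
  rcases le_or_gt (1 / 4) |p.2| with h | h
  · exact Or.inl ((norm_mobiusCoord_snd p).symm ▸ h)
  refine (mobiusCoord_mem_outsideHole_iff ?_).2 hp'
  linarith [(triangleGauge_le_iff.1 hp).2, (abs_lt.1 h).1]

lemma quarter_le_norm {p : ℝ × ℝ} (hp : mobiusCoord p ∈ outsideHole) : 1 / 4 ≤ ‖p‖ := by
  rcases le_total |p.1| (3 / 4) with h | h
  · exact (mobiusCoord_mem_outsideHole_iff h).1 hp
  · exact le_trans (by linarith) (show |p.1| ≤ ‖p‖ from norm_fst_le p)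

-- Since `v + 2 * |u| ≤ 1` and `-v + 2 * |u + 1| ≤ 1` sum to `|u| + |u + 1| ≤ 1`, two translates of
-- the triangle that differ by one deck transformation meet along a common side only.
lemma eq_or_eq_trianglePath_of_mobiusCoord_eq {p q : ℝ × ℝ} (hp : triangleGauge p ≤ 1)
    (hq : triangleGauge q ≤ 1) (hle : p.1 ≤ q.1) (h : mobiusCoord p = mobiusCoord q) :
    p = q ∨ (∃ s ∈ Icc (0 : ℝ) 1, p = trianglePath s ∧ q = trianglePath (s + 1)) ∨
      p = trianglePath 0 ∧ q = trianglePath 2 := by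
  obtain ⟨n, h₁, h₂⟩ := eq_of_mobiusCoord_eq h
  obtain ⟨u, v⟩ := p
  obtain ⟨u', v'⟩ := q
  have hu := abs_le.1 (abs_fst_le_one hp)
  have hu' := abs_le.1 (abs_fst_le_one hq)
  obtain ⟨hv₁, hv₂⟩ := triangleGauge_le_iff.1 hp
  obtain ⟨hv₁', hv₂'⟩ := triangleGauge_le_iff.1 hq
  dsimp only at *
  have hn₀ : 0 ≤ n := by exact_mod_cast (by linarith : (0 : ℝ) ≤ n)
  have hn₂ : n ≤ 2 := by exact_mod_cast (by linarith : (n : ℝ) ≤ 2)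
  obtain rfl | rfl | rfl : n = 0 ∨ n = 1 ∨ n = 2 := by omega
  · norm_num at h₁ h₂
    exact Or.inl (Prod.ext h₁.symm h₂)
  · norm_num at h₁ h₂
    subst h₁ h₂
    have h₃ := neg_le_abs u
    have h₄ := le_abs_self (u + 1)
    have hs : u + 1 ∈ Icc (0 : ℝ) 1 := ⟨by linarith, by linarith [le_abs_self u]⟩
    refine Or.inr (Or.inl ⟨u + 1, hs, ?_, ?_⟩)
    · rw [trianglePath_of_mem_Icc_zero_one hs]
      exact Prod.ext (by ring) (by dsimp only; linarith)
    · rw [trianglePath_of_mem_Icc_one_two ⟨by linarith [hs.1], by linarith [hs.2]⟩]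
      exact Prod.ext (by ring) (by dsimp only; linarith)
  · norm_num at h₁ h₂
    subst h₁ h₂
    have hu₁ : u = -1 := by linarith
    subst hu₁
    norm_num at hv₂
    refine Or.inr (Or.inr ⟨trianglePath_zero.symm ▸ ?_, ?_⟩)
    · exact Prod.ext rfl (by dsimp only; linarith)
    · rw [trianglePath_of_mem_Icc_two_three (by norm_num)]
      exact Prod.ext (by norm_num) (by dsimp only; linarith)

lemma exists_triangleGauge_le_one (z : X) :
    ∃ p, triangleGauge p ≤ 1 ∧ mobiusCoord p = coord z := by
  obtain ⟨⟨u, v⟩, hu, hv, h⟩ := exists_mobiusCoord_eq z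
  obtain ⟨hv₁, hv₂⟩ := abs_le.1 hv
  obtain ⟨hu₁, hu₂⟩ := abs_le.1 hu
  dsimp only at hu₁ hu₂ hv₁ hv₂
  rcases le_or_gt (v + 2 * |u|) 1 with huv | huv
  · exact ⟨(u, v), triangleGauge_le_iff.2 ⟨by linarith, huv⟩, h⟩
  rcases le_total 0 u with hu₀ | hu₀
  · rw [abs_of_nonneg hu₀] at huv
    refine ⟨(u - 1, -v), triangleGauge_le_iff.2 ⟨by linarith, ?_⟩, ?_⟩
    · rw [abs_of_nonpos (by linarith)]; linarith
    · rw [mobiusCoord_sub_one, neg_neg, h]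
  · rw [abs_of_nonpos hu₀] at huv
    refine ⟨(u + 1, -v), triangleGauge_le_iff.2 ⟨by linarith, ?_⟩, ?_⟩
    · rw [abs_of_nonneg (by linarith)]; linarith
    · rw [mobiusCoord_add_one, neg_neg, h]

lemma exists_triangleBase_of_mem_C1 {z : X} (hz : z ∈ C1) :
    ∃ u, |u| ≤ 1 ∧ mobiusCoord (u, -1) = coord z := by
  obtain ⟨⟨u, v⟩, hu, -, h⟩ := exists_mobiusCoord_eq z
  obtain ⟨hu₁, hu₂⟩ := abs_le.1 hu
  dsimp only at hu₁ hu₂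
  have hv := (height_eq_abs h).symm.trans (mem_C1_iff.1 hz)
  rcases eq_or_eq_neg_of_abs_eq hv with rfl | rfl
  · rcases le_total 0 u with hu₀ | hu₀
    · exact ⟨u - 1, abs_le.2 ⟨by linarith, by linarith⟩, by rw [mobiusCoord_sub_one, neg_neg, h]⟩
    · exact ⟨u + 1, abs_le.2 ⟨by linarith, by linarith⟩, by rw [mobiusCoord_add_one, neg_neg, h]⟩
  · exact ⟨u, abs_le.2 ⟨by linarith, by linarith⟩, h⟩

end Triangle

section Polar

/-- The factor that places `polarPoint (θ, l)` on the ray through `trianglePath θ`. -/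
noncomputable def polarRadius (θ l : ℝ) : ℝ := (1 - l) * (1 / (4 * ‖trianglePath θ‖)) + l

/-- The point that divides in the ratio `l : 1 - l` the radial segment from the sphere of radius
`1/4` to the point `trianglePath θ` of the boundary of the triangle. -/
noncomputable def polarPoint (p : ℝ × ℝ) : ℝ × ℝ := polarRadius p.1 p.2 • trianglePath p.1

/-- The domain of the polar coordinates. -/
def polarBox : Set (ℝ × ℝ) := Icc 0 3 ×ˢ Icc 0 1

lemma isCompact_polarBox : IsCompact polarBox := isCompact_Icc.prod isCompact_Icc

lemma polarRadius_one (θ : ℝ) : polarRadius θ 1 = 1 := by simp [polarRadius]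

lemma polarPoint_one (θ : ℝ) : polarPoint (θ, 1) = trianglePath θ := by
  rw [polarPoint, polarRadius_one, one_smul]

lemma polarRadius_mem_Ioc {p : ℝ × ℝ} (hp : p ∈ polarBox) : polarRadius p.1 p.2 ∈ Ioc 0 1 := by
  obtain ⟨hθ, h₀, h₁⟩ := hp
  have hb := one_third_le_norm_trianglePath hθ
  have hk : 1 / (4 * ‖trianglePath p.1‖) ≤ 3 / 4 := by
    rw [div_le_iff₀ (by linarith)]
    linarith
  have hk₀ : 0 < 1 / (4 * ‖trianglePath p.1‖) := by positivity
  constructor <;> unfold polarRadius <;> nlinarith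

lemma norm_polarPoint {p : ℝ × ℝ} (hp : p ∈ polarBox) :
    ‖polarPoint p‖ = (1 - p.2) * (1 / 4) + p.2 * ‖trianglePath p.1‖ := by
  have hb := one_third_le_norm_trianglePath hp.1
  rw [polarPoint, norm_smul, Real.norm_of_nonneg (polarRadius_mem_Ioc hp).1.le, polarRadius]
  field_simp

lemma triangleGauge_polarPoint {p : ℝ × ℝ} (hp : p ∈ polarBox) :
    triangleGauge (polarPoint p) = polarRadius p.1 p.2 := by
  rw [polarPoint, triangleGauge_smul (polarRadius_mem_Ioc hp).1.le,
    triangleGauge_trianglePath hp.1, mul_one]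

lemma triangleGauge_polarPoint_le_one {p : ℝ × ℝ} (hp : p ∈ polarBox) :
    triangleGauge (polarPoint p) ≤ 1 :=
  (triangleGauge_polarPoint hp).trans_le (polarRadius_mem_Ioc hp).2

lemma trianglePath_eq_and_snd_eq_of_polarPoint_eq {p q : ℝ × ℝ} (hp : p ∈ polarBox)
    (hq : q ∈ polarBox) (h : polarPoint p = polarPoint q) :
    trianglePath p.1 = trianglePath q.1 ∧ p.2 = q.2 := by
  have hr : polarRadius p.1 p.2 = polarRadius q.1 q.2 := by
    rw [← triangleGauge_polarPoint hp, h, triangleGauge_polarPoint hq]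
  have hb : trianglePath p.1 = trianglePath q.1 :=
    smul_right_injective _ (polarRadius_mem_Ioc hq).1.ne' (by simpa only [polarPoint, hr] using h)
  have hnorm := norm_polarPoint hp
  rw [h, norm_polarPoint hq, ← hb] at hnorm
  refine ⟨hb, mul_right_cancel₀ (b := ‖trianglePath p.1‖ - 1 / 4) ?_ (by linear_combination -hnorm)⟩
  linarith [one_third_le_norm_trianglePath hp.1]

lemma exists_polarPoint_eq {p : ℝ × ℝ} (hp : triangleGauge p ≤ 1) (hp' : 1 / 4 ≤ ‖p‖) :
    ∃ q ∈ polarBox, polarPoint q = p := by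
  set c := triangleGauge p with hc
  have hc₀ : 0 < c := by linarith [norm_le_triangleGauge p]
  obtain ⟨θ, hθ, hb⟩ := exists_trianglePath_eq (p := c⁻¹ • p) (by
    rw [triangleGauge_smul (by positivity), ← hc, inv_mul_cancel₀ hc₀.ne'])
  have hpb : p = c • trianglePath θ := by rw [hb, smul_inv_smul₀ hc₀.ne']
  have hnorm : ‖p‖ = c * ‖trianglePath θ‖ := by rw [hpb, norm_smul, Real.norm_of_nonneg hc₀.le]
  have hb₀ := one_third_le_norm_trianglePath hθ
  have hl : (‖p‖ - 1 / 4) / (‖trianglePath θ‖ - 1 / 4) ∈ Icc (0 : ℝ) 1 := by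
    refine ⟨div_nonneg (by linarith) (by linarith), div_le_one_of_le₀ ?_ (by linarith)⟩
    nlinarith
  have hq : (θ, (‖p‖ - 1 / 4) / (‖trianglePath θ‖ - 1 / 4)) ∈ polarBox := ⟨hθ, hl⟩
  refine ⟨_, hq, ?_⟩
  have hr : polarRadius θ ((‖p‖ - 1 / 4) / (‖trianglePath θ‖ - 1 / 4)) = c := by
    have hcancel := div_mul_cancel₀ (‖p‖ - 1 / 4) (b := ‖trianglePath θ‖ - 1 / 4) (by linarith)
    have h := norm_polarPoint hq
    rw [polarPoint, norm_smul, Real.norm_of_nonneg (polarRadius_mem_Ioc hq).1.le] at h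
    refine mul_right_cancel₀ (b := ‖trianglePath θ‖) (by linarith) ?_
    linear_combination h + hcancel + hnorm
  rw [polarPoint, hr, ← hpb]

lemma continuousOn_polarPoint : ContinuousOn polarPoint polarBox := by
  have hne : ∀ p ∈ polarBox, 4 * ‖trianglePath p.1‖ ≠ 0 := fun p hp => by
    linarith [one_third_le_norm_trianglePath hp.1]
  unfold polarPoint polarRadius
  fun_prop (disch := assumption)

/-- The retraction of the plane onto `polarBox`. -/
noncomputable def polarClamp (p : ℝ × ℝ) : ℝ × ℝ :=
  (projIcc 0 3 zero_le_three p.1, projIcc 0 1 zero_le_one p.2)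

lemma polarClamp_mem (p : ℝ × ℝ) : polarClamp p ∈ polarBox :=
  ⟨Subtype.coe_prop _, Subtype.coe_prop _⟩

lemma polarClamp_of_mem {p : ℝ × ℝ} (hp : p ∈ polarBox) : polarClamp p = p := by
  rw [polarClamp, projIcc_of_mem _ hp.1, projIcc_of_mem _ hp.2]

lemma continuous_polarClamp : Continuous polarClamp := by
  unfold polarClamp
  fun_prop

lemma mobiusCoord_polarPoint_mem_range {p : ℝ × ℝ} (hp : p ∈ polarBox) :
    mobiusCoord (polarPoint p) ∈ range coord := by
  have hg := triangleGauge_polarPoint_le_one hp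
  have hb := one_third_le_norm_trianglePath hp.1
  refine mobiusCoord_mem_range_coord ((norm_snd_le _).trans ((norm_le_triangleGauge _).trans hg))
    (mobiusCoord_mem_outsideHole hg ?_)
  rw [norm_polarPoint hp]
  nlinarith [hp.2.1]

/-- Polar coordinates on the punctured Möbius band: the second coordinate is `0` on `C2`, and `1`
on the image of the boundary of the triangle. Outside `polarBox`, arguments are clamped. -/
noncomputable def polar : C(ℝ × ℝ, X) where
  toFun p := ofCoord (mobiusCoord (polarPoint (polarClamp p)))
  continuous_toFun := continuous_ofCoord
    (continuous_mobiusCoord.comp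
      (continuousOn_polarPoint.comp_continuous continuous_polarClamp polarClamp_mem))
    fun p => mobiusCoord_polarPoint_mem_range (polarClamp_mem p)

lemma coord_polar {p : ℝ × ℝ} (hp : p ∈ polarBox) :
    coord (polar p) = mobiusCoord (polarPoint p) := by
  change coord (ofCoord _) = _
  rw [polarClamp_of_mem hp, coord_ofCoord (mobiusCoord_polarPoint_mem_range hp)]

lemma polar_eq_of_mobiusCoord_eq {p : ℝ × ℝ} (hp : p ∈ polarBox) {z : X}
    (h : mobiusCoord (polarPoint p) = coord z) : polar p = z :=
  coord_injective ((coord_polar hp).trans h)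

lemma exists_polar_eq (z : X) : ∃ p ∈ polarBox, polar p = z := by
  obtain ⟨p, hp, h⟩ := exists_triangleGauge_le_one z
  obtain ⟨q, hq, rfl⟩ := exists_polarPoint_eq hp (quarter_le_norm (h ▸ coord_mem_outsideHole z))
  exact ⟨q, hq, polar_eq_of_mobiusCoord_eq hq h⟩

lemma polar_zero_mem_C2 {θ : ℝ} (hθ : θ ∈ Icc 0 3) : polar (θ, 0) ∈ C2 := by
  have hp : (θ, (0 : ℝ)) ∈ polarBox := ⟨hθ, left_mem_Icc.2 zero_le_one⟩
  exact mem_C2_iff.2 ⟨_, by rw [norm_polarPoint hp]; norm_num, (coord_polar hp).symm⟩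

lemma exists_polar_eq_of_mem_C2 {z : X} (hz : z ∈ C2) : ∃ θ ∈ Icc (0 : ℝ) 3, polar (θ, 0) = z := by
  obtain ⟨p, hp, h⟩ := mem_C2_iff.1 hz
  obtain ⟨⟨θ, l⟩, hq, rfl⟩ := exists_polarPoint_eq (by linarith [triangleGauge_le p]) hp.ge
  obtain rfl : l = 0 := by
    rw [norm_polarPoint hq] at hp
    have hb := one_third_le_norm_trianglePath hq.1
    dsimp only at hp hb
    nlinarith
  exact ⟨θ, hq.1, polar_eq_of_mobiusCoord_eq hq h⟩

lemma mem_polarBox_one {θ : ℝ} (hθ : θ ∈ Icc 0 3) : (θ, (1 : ℝ)) ∈ polarBox :=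
  ⟨hθ, right_mem_Icc.2 zero_le_one⟩

lemma Icc_two_three_subset : Icc (2 : ℝ) 3 ⊆ Icc 0 3 := Icc_subset_Icc_left zero_le_two

lemma polar_one_mem_C1 {θ : ℝ} (hθ : θ ∈ Icc 2 3) : polar (θ, 1) ∈ C1 := by
  rw [mem_C1_iff, height_eq_abs (coord_polar (mem_polarBox_one (Icc_two_three_subset hθ))).symm,
    polarPoint_one, trianglePath_of_mem_Icc_two_three hθ, abs_neg, abs_one]

lemma exists_polar_eq_of_mem_C1 {z : X} (hz : z ∈ C1) : ∃ θ ∈ Icc (2 : ℝ) 3, polar (θ, 1) = z := by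
  obtain ⟨u, hu, h⟩ := exists_triangleBase_of_mem_C1 hz
  rw [abs_le] at hu
  have hθ : (5 - u) / 2 ∈ Icc (2 : ℝ) 3 := ⟨by linarith, by linarith⟩
  refine ⟨_, hθ, polar_eq_of_mobiusCoord_eq (mem_polarBox_one (Icc_two_three_subset hθ)) ?_⟩
  rw [polarPoint_one, trianglePath_of_mem_Icc_two_three hθ, ← h]
  congr 2
  ring

end Polar

section Seam

variable {Y : Type*}

/-- A function on `polarBox` is seam invariant if it takes equal values at points with equal images
under `polar`: these are the two radial sides, and the points of the top edge that correspond to the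
two legs of the triangle. -/
def IsSeamInvariant (F : ℝ × ℝ → Y) : Prop :=
  (∀ l ∈ Icc (0 : ℝ) 1, F (0, l) = F (3, l)) ∧ ∀ s ∈ Icc (0 : ℝ) 1, F (s, 1) = F (s + 1, 1)

lemma IsSeamInvariant.eq_of_polarPoint_eq {F : ℝ × ℝ → Y} (hF : IsSeamInvariant F) {p q : ℝ × ℝ}
    (hp : p ∈ polarBox) (hq : q ∈ polarBox) (h : polarPoint p = polarPoint q) : F p = F q := by
  wlog hle : p.1 ≤ q.1 generalizing p q
  · exact (this hq hp h.symm (le_of_not_ge hle)).symm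
  obtain ⟨θ, l⟩ := p
  obtain ⟨θ', l'⟩ := q
  obtain ⟨hb, hl⟩ := trianglePath_eq_and_snd_eq_of_polarPoint_eq hp hq h
  dsimp only at hl hb hle
  subst hl
  obtain rfl | ⟨rfl, rfl⟩ := eq_or_eq_three_of_trianglePath_eq hp.1 hq.1 hle hb
  · rfl
  · exact hF.1 l hp.2

lemma IsSeamInvariant.eq_of_polar_eq {F : ℝ × ℝ → Y} (hF : IsSeamInvariant F) {p q : ℝ × ℝ}
    (hp : p ∈ polarBox) (hq : q ∈ polarBox) (h : polar p = polar q) : F p = F q := by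
  wlog hle : (polarPoint p).1 ≤ (polarPoint q).1 generalizing p q
  · exact (this hq hp h.symm (le_of_not_ge hle)).symm
  have eq_top : ∀ {r : ℝ × ℝ} {θ : ℝ}, r ∈ polarBox → θ ∈ Icc 0 3 →
      polarPoint r = trianglePath θ → F r = F (θ, 1) := fun hr hθ hrθ =>
    hF.eq_of_polarPoint_eq hr (mem_polarBox_one hθ) (hrθ.trans (polarPoint_one _).symm)
  have hcoord : mobiusCoord (polarPoint p) = mobiusCoord (polarPoint q) := by
    rw [← coord_polar hp, h, coord_polar hq]
  rcases eq_or_eq_trianglePath_of_mobiusCoord_eq (triangleGauge_polarPoint_le_one hp)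
    (triangleGauge_polarPoint_le_one hq) hle hcoord with heq | ⟨s, hs, hps, hqs⟩ | ⟨hp₀, hq₂⟩
  · exact hF.eq_of_polarPoint_eq hp hq heq
  · rw [eq_top hp ⟨hs.1, by linarith [hs.2]⟩ hps,
      eq_top hq ⟨by linarith [hs.1], by linarith [hs.2]⟩ hqs, hF.2 s hs]
  · rw [eq_top hp (by norm_num) hp₀, eq_top hq (by norm_num) hq₂, hF.2 0 (by norm_num), zero_add,
      hF.2 1 (by norm_num), one_add_one_eq_two]

lemma isSeamInvariant_polar : IsSeamInvariant polar := by
  refine ⟨fun l hl => ?_, fun s hs => ?_⟩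
  · refine polar_eq_of_mobiusCoord_eq ⟨by norm_num, hl⟩ ?_
    rw [coord_polar ⟨by norm_num, hl⟩]
    simp only [polarPoint, polarRadius, trianglePath_zero, trianglePath_three]
  · refine polar_eq_of_mobiusCoord_eq (mem_polarBox_one ⟨hs.1, by linarith [hs.2]⟩) ?_
    rw [coord_polar (mem_polarBox_one ⟨by linarith [hs.1], by linarith [hs.2]⟩), polarPoint_one,
      polarPoint_one, trianglePath_of_mem_Icc_zero_one hs,
      trianglePath_of_mem_Icc_one_two ⟨by linarith [hs.1], by linarith [hs.2]⟩,
      mobiusCoord_sub_one, add_sub_cancel_right]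
    congr 2
    ring

variable {Z : Type*} [TopologicalSpace Z] [TopologicalSpace Y]

lemma isQuotientMap_prodMap_polar :
    Topology.IsQuotientMap fun w : Z × polarBox => (w.1, polar w.2) := by
  have : CompactSpace polarBox := isCompact_iff_compactSpace.1 isCompact_polarBox
  have hclosed : IsClosedMap (Prod.map id fun p : polarBox => polar p : Z × polarBox → Z × X) :=
    (isProperMap_id.prodMap (Continuous.isProperMap (by fun_prop))).isClosedMap
  refine hclosed.isQuotientMap (by fun_prop) fun ⟨t, z⟩ => ?_
  obtain ⟨p, hp, rfl⟩ := exists_polar_eq z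
  exact ⟨(t, ⟨p, hp⟩), rfl⟩

lemma exists_continuous_of_isSeamInvariant (Ψ : C(Z × (ℝ × ℝ), Y))
    (hΨ : ∀ t, IsSeamInvariant fun p => Ψ (t, p)) :
    ∃ F : C(Z × X, Y), ∀ t, ∀ p ∈ polarBox, F (t, polar p) = Ψ (t, p) := by
  choose π hπ hpolar using exists_polar_eq
  have hF : ∀ t, ∀ p ∈ polarBox, Ψ (t, π (polar p)) = Ψ (t, p) := fun t p hp =>
    (hΨ t).eq_of_polar_eq (hπ _) hp (hpolar _)
  refine ⟨⟨fun w => Ψ (w.1, π w.2), isQuotientMap_prodMap_polar.continuous_iff.2 ?_⟩, hF⟩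
  have hc : Continuous fun w : Z × polarBox => Ψ (w.1, w.2) := by fun_prop
  exact hc.congr fun w => (hF w.1 w.2 w.2.2).symm

end Seam

section Lift

variable {α : Type*} [DecidableEq α] {A : Set α}

@[simp]
lemma toRose_smul (k : FreeGroup α) (v : CayleyTree α) : toRose (k • v) = toRose v :=
  Quotient.sound ⟨k, rfl⟩

lemma exists_smul_eq_of_toRose_eq {v w : CayleyTree α} (h : toRose v = toRose w) :
    ∃ k : FreeGroup α, k • w = v := Quotient.exact h

lemma continuous_toRose : Continuous (toRose (α := α)) := continuous_quot_mk

lemma edgePoint_eq_coe_smul {v : CayleyTree α} {ε : CayleyEdge α} {s : ℝ}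
    (h : edgePoint ε s = v.1) (k : FreeGroup α) : edgePoint (k * ε.1, ε.2) s = (k • v).1 := by
  rw [coe_smul, ← h, translate_edgePoint]

lemma smul_mem_labelledEdges {v : CayleyTree α} (hv : v ∈ labelledEdges A) (k : FreeGroup α) :
    k • v ∈ labelledEdges A := by
  obtain ⟨ε, hε, s, hs, h⟩ := hv
  exact ⟨(k * ε.1, ε.2), hε, s, hs, edgePoint_eq_coe_smul h k⟩

lemma exists_smul_mem_subtree {v : CayleyTree α} (hv : v ∈ labelledEdges A) :
    ∃ k : FreeGroup α, k • v ∈ subtree A := by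
  obtain ⟨ε, hε, s, hs, h⟩ := hv
  exact ⟨ε.1⁻¹, (mem_subtree_iff (ε := (ε.1⁻¹ * ε.1, ε.2)) hε hs (edgePoint_eq_coe_smul h _)).2
    (by simp [one_mem])⟩

lemma eq_smul_of_isPreconnected [Finite α] {Z : Type*} [TopologicalSpace Z] {S : Set Z}
    (hS : IsPreconnected S) {F G : Z → CayleyTree α} (hF : Continuous F) (hG : Continuous G)
    (h : ∀ z ∈ S, toRose (F z) = toRose (G z)) {k : FreeGroup α} {a : Z} (ha : a ∈ S)
    (hk : F a = k • G a) {z : Z} (hz : z ∈ S) : F z = k • G z :=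
  isQuotientCoveringMap_toRose.isCoveringMap.eqOn_of_comp_eqOn hS hF.continuousOn
    (hG.const_smul k).continuousOn (fun z hz => (h z hz).trans (toRose_smul k (G z)).symm) ha hk hz

end Lift

section EdgePath

open FreeGroup

variable {α : Type*} [DecidableEq α]

/-- The edge `ε` of the Cayley tree as a path, constant outside `[0, 1]`. -/
noncomputable def edgePath (ε : CayleyEdge α) (s : ℝ) : CayleyTree α :=
  ⟨edgePoint ε (projIcc 0 1 zero_le_one s), edgePoint_mem (Subtype.coe_prop _)⟩

lemma coe_edgePath (ε : CayleyEdge α) {s : ℝ} (hs : s ∈ Icc (0 : ℝ) 1) :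
    (edgePath ε s).1 = edgePoint ε s := by
  simp only [edgePath, projIcc_of_mem zero_le_one hs]

@[fun_prop]
lemma continuous_edgePath (ε : CayleyEdge α) :
    Continuous (edgePath ε) :=
  ((continuous_edgePoint ε).comp (continuous_subtype_val.comp continuous_projIcc)).subtype_mk _

lemma edgePath_one_eq (g : FreeGroup α) (a b : α) :
    edgePath (g, a) 1 = edgePath (g * of a, b) 0 := Subtype.ext <| by
  rw [coe_edgePath _ (by norm_num), coe_edgePath _ (by norm_num), edgePoint_one, edgePoint_zero]

lemma smul_edgePath (k : FreeGroup α) (ε : CayleyEdge α) (s : ℝ) :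
    k • edgePath ε s = edgePath (k * ε.1, ε.2) s :=
  Subtype.ext (translate_edgePoint k ε _)

lemma edgePath_mem_labelledEdges {A : Set α} {ε : CayleyEdge α} (hε : ε.2 ∈ A) (s : ℝ) :
    edgePath ε s ∈ labelledEdges A :=
  ⟨ε, hε, _, Subtype.coe_prop _, rfl⟩

end EdgePath

section RoseMap

open FreeGroup

/-- The path in the Cayley tree that reads the word `y * y * x`, where `y` is the letter `false` and
`x` is the letter `true`. It is the lift of the boundary of the triangle onto which the
parametrisation `polar` retracts the punctured Möbius band: the two legs are identified with each
other, and the base is the circle `C1`. -/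
noncomputable def wordPath (θ : ℝ) : CayleyTree Bool :=
  if θ ≤ 1 then edgePath (1, false) θ
  else if θ ≤ 2 then edgePath (of false, false) (θ - 1)
  else edgePath (of false * of false, true) (θ - 2)

lemma continuous_wordPath : Continuous wordPath := by
  refine Continuous.if_le (by fun_prop) (Continuous.if_le (by fun_prop) (by fun_prop)
    continuous_id continuous_const ?_) continuous_id continuous_const ?_
  · rintro θ rfl
    rw [sub_self, show (2 : ℝ) - 1 = 1 by norm_num, edgePath_one_eq]
  · rintro θ rfl
    rw [if_pos one_le_two, sub_self, edgePath_one_eq _ _ false, one_mul]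

lemma wordPath_of_le_one {θ : ℝ} (hθ : θ ≤ 1) : wordPath θ = edgePath (1, false) θ := if_pos hθ

lemma wordPath_of_mem_Icc_one_two {θ : ℝ} (hθ : θ ∈ Icc 1 2) :
    wordPath θ = edgePath (of false, false) (θ - 1) := by
  rcases hθ.1.eq_or_lt with rfl | h
  · rw [wordPath_of_le_one le_rfl, sub_self, edgePath_one_eq _ _ false, one_mul]
  · rw [wordPath, if_neg h.not_ge, if_pos hθ.2]

lemma wordPath_of_two_le {θ : ℝ} (hθ : 2 ≤ θ) :
    wordPath θ = edgePath (of false * of false, true) (θ - 2) := by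
  rcases hθ.eq_or_lt with rfl | h
  · rw [wordPath_of_mem_Icc_one_two (by norm_num), sub_self, ← edgePath_one_eq]
    norm_num
  · rw [wordPath, if_neg (by linarith), if_neg h.not_ge]

lemma isSeamInvariant_toRose_wordPath : IsSeamInvariant fun p => toRose (wordPath p.1) := by
  refine ⟨fun l _ => ?_, fun s hs => ?_⟩ <;> dsimp only
  · rw [wordPath_of_le_one zero_le_one, wordPath_of_two_le (by norm_num),
      show (3 : ℝ) - 2 = 1 by norm_num, edgePath_one_eq _ _ false,
      ← toRose_smul (of false * of false * of true), smul_edgePath, mul_one]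
  · rw [wordPath_of_le_one hs.2,
      wordPath_of_mem_Icc_one_two ⟨by linarith [hs.1], by linarith [hs.2]⟩, add_sub_cancel_right,
      ← toRose_smul (of false), smul_edgePath, mul_one]

lemma exists_roseMap : ∃ r : C(X, Rose Bool), ∀ p ∈ polarBox,
    r (polar p) = toRose (wordPath p.1) := by
  obtain ⟨F, hF⟩ := exists_continuous_of_isSeamInvariant
    ⟨fun w : Unit × (ℝ × ℝ) => toRose (wordPath w.2.1),
      continuous_toRose.comp (continuous_wordPath.comp (by fun_prop))⟩
    fun _ => isSeamInvariant_toRose_wordPath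
  exact ⟨F.comp ⟨fun z => ((), z), by fun_prop⟩, hF ()⟩

/-- The radial retraction of the punctured Möbius band onto the image of the boundary of the
triangle, which is a rose with the two petals `C1` (the letter `true`) and the common image of the
legs (the letter `false`). -/
noncomputable def roseMap : C(X, Rose Bool) := exists_roseMap.choose

lemma roseMap_polar {p : ℝ × ℝ} (hp : p ∈ polarBox) : roseMap (polar p) = toRose (wordPath p.1) :=
  exists_roseMap.choose_spec p hp

lemma mem_labelledEdges_of_toRose_eq {z : X} (hz : z ∈ C1) {v : CayleyTree Bool}
    (hv : toRose v = roseMap z) : v ∈ labelledEdges {true} := by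
  obtain ⟨θ, hθ, rfl⟩ := exists_polar_eq_of_mem_C1 hz
  rw [roseMap_polar (mem_polarBox_one (Icc_two_three_subset hθ)), wordPath_of_two_le hθ.1] at hv
  obtain ⟨k, rfl⟩ := exists_smul_eq_of_toRose_eq hv
  exact smul_mem_labelledEdges (edgePath_mem_labelledEdges (mem_singleton true) _) k

/-- The loop in the punctured Möbius band that is the petal of `roseMap` with a given letter. -/
noncomputable def petal (a : Bool) (s : ℝ) : X :=
  polar ((if a then 2 else 0) + s, 1)

@[fun_prop]
lemma continuous_petal (a : Bool) : Continuous (petal a) := by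
  unfold petal
  fun_prop

lemma polar_one_one : polar (1, 1) = polar (0, 1) := by
  simpa using (isSeamInvariant_polar.2 0 (by norm_num)).symm

lemma polar_two_one : polar (2, 1) = polar (0, 1) := by
  rw [← polar_one_one, isSeamInvariant_polar.2 1 (by norm_num), one_add_one_eq_two]

lemma petal_zero (a : Bool) : petal a 0 = polar (0, 1) := by
  cases a
  · simp [petal]
  · simpa [petal] using polar_two_one

lemma petal_one (a : Bool) : petal a 1 = polar (0, 1) := by
  cases a
  · simpa [petal] using polar_one_one
  · rw [isSeamInvariant_polar.1 1 (by norm_num), petal, if_pos rfl]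
    norm_num

/-- The map from the Cayley tree to the punctured Möbius band that runs along the petals. -/
noncomputable def petalMap : C(CayleyTree Bool, X) :=
  (exists_continuous_of_loops petal continuous_petal petal_zero petal_one).choose

lemma petalMap_eq {v : CayleyTree Bool} {ε : CayleyEdge Bool} {s : ℝ} (hs : s ∈ Icc (0 : ℝ) 1)
    (h : edgePoint ε s = v.1) : petalMap v = petal ε.2 s :=
  (exists_continuous_of_loops petal continuous_petal petal_zero petal_one).choose_spec v ε s hs h

@[simp]
lemma petalMap_smul (k : FreeGroup Bool) (v : CayleyTree Bool) :
    petalMap (k • v) = petalMap v := by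
  obtain ⟨ε, s, hs, h⟩ := v.2
  rw [petalMap_eq hs h, petalMap_eq hs (edgePoint_eq_coe_smul h k)]

lemma petalMap_edgePath (ε : CayleyEdge Bool) {s : ℝ} (hs : s ∈ Icc (0 : ℝ) 1) :
    petalMap (edgePath ε s) = petal ε.2 s :=
  petalMap_eq hs (coe_edgePath ε hs).symm

lemma petalMap_mem_C1 {v : CayleyTree Bool} (hv : v ∈ labelledEdges {true}) : petalMap v ∈ C1 := by
  obtain ⟨ε, hε, s, hs, h⟩ := hv
  rw [petalMap_eq hs h, mem_singleton_iff.1 hε, petal, if_pos rfl]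
  exact polar_one_mem_C1 ⟨by linarith [hs.1], by linarith [hs.2]⟩

lemma petalMap_wordPath {θ : ℝ} (hθ : θ ∈ Icc 0 3) : petalMap (wordPath θ) = polar (θ, 1) := by
  rcases le_total θ 1 with h₁ | h₁
  · rw [wordPath_of_le_one h₁, petalMap_edgePath _ ⟨hθ.1, h₁⟩, petal, if_neg Bool.false_ne_true,
      zero_add]
  rcases le_total θ 2 with h₂ | h₂
  · rw [wordPath_of_mem_Icc_one_two ⟨h₁, h₂⟩, petalMap_edgePath _ ⟨by linarith, by linarith⟩, petal,
      if_neg Bool.false_ne_true, zero_add, isSeamInvariant_polar.2 _ ⟨by linarith, by linarith⟩,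
      sub_add_cancel]
  · rw [wordPath_of_two_le h₂, petalMap_edgePath _ ⟨by linarith, by linarith [hθ.2]⟩, petal,
      if_pos rfl, add_sub_cancel]

lemma petalMap_eq_polar {v : CayleyTree Bool} {p : ℝ × ℝ} (hp : p ∈ polarBox)
    (hv : toRose v = roseMap (polar p)) : petalMap v = polar (p.1, 1) := by
  rw [roseMap_polar hp] at hv
  obtain ⟨k, rfl⟩ := exists_smul_eq_of_toRose_eq hv
  rw [petalMap_smul, petalMap_wordPath hp.1]

end RoseMap

section PushIntoCircle

lemma exists_pushOut : ∃ D : C(unitInterval × X, X), ∀ t, ∀ p ∈ polarBox,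
    D (t, polar p) = polar (p.1, p.2 + t * (1 - p.2)) := by
  refine exists_continuous_of_isSeamInvariant
    ⟨fun w : unitInterval × (ℝ × ℝ) => polar (w.2.1, w.2.2 + w.1 * (1 - w.2.2)), by fun_prop⟩
    fun t => ⟨fun l hl => isSeamInvariant_polar.1 _ ⟨?_, ?_⟩, fun s hs => ?_⟩
  · have := mul_nonneg t.2.1 (sub_nonneg.2 hl.2)
    linarith [hl.1]
  · nlinarith [t.2.2, hl.2]
  · simpa using isSeamInvariant_polar.2 s hs

/-- The deformation that moves the punctured Möbius band radially away from `C2`, onto the image of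
the boundary of the triangle. -/
noncomputable def pushOut : C(unitInterval × X, X) := exists_pushOut.choose

lemma pushOut_polar (t : unitInterval) {p : ℝ × ℝ} (hp : p ∈ polarBox) :
    pushOut (t, polar p) = polar (p.1, p.2 + t * (1 - p.2)) := exists_pushOut.choose_spec t p hp

lemma pushOut_zero (z : X) : pushOut (0, z) = z := by
  obtain ⟨p, hp, rfl⟩ := exists_polar_eq z
  simp [pushOut_polar 0 hp]

lemma pushOut_of_mem_C1 {z : X} (hz : z ∈ C1) (t : unitInterval) : pushOut (t, z) = z := by
  obtain ⟨θ, hθ, rfl⟩ := exists_polar_eq_of_mem_C1 hz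
  simp [pushOut_polar t (mem_polarBox_one (Icc_two_three_subset hθ))]

lemma petalMap_eq_pushOut {v : CayleyTree Bool} {z : X} (hv : toRose v = roseMap z) :
    petalMap v = pushOut (1, z) := by
  obtain ⟨p, hp, rfl⟩ := exists_polar_eq z
  simp [petalMap_eq_polar hp hv, pushOut_polar 1 hp]

/-- The self-maps of the punctured Möbius band that send `C2` into `C1` and collapse `C1` to a
point. -/
def CollapsesC1 (f : C(X, X)) : Prop := MapsTo f C2 C1 ∧ ∃ b, ∀ z ∈ C1, f z = b

variable {f : C(X, X)} {F : C(ℝ × ℝ, CayleyTree Bool)}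

lemma exists_lift (h21 : MapsTo f C2 C1) : ∃ F : C(ℝ × ℝ, CayleyTree Bool),
    (∀ p, toRose (F p) = roseMap (f (polar p))) ∧ F (0, 0) ∈ subtree {true} := by
  obtain ⟨v, hv⟩ := Quotient.exists_rep (roseMap (f (polar (0, 0))))
  obtain ⟨k, hk⟩ := exists_smul_mem_subtree
    (mem_labelledEdges_of_toRose_eq (h21 (polar_zero_mem_C2 (by norm_num))) hv)
  obtain ⟨F, ⟨hF₀, hF⟩, -⟩ :=
    isQuotientCoveringMap_toRose.isCoveringMap.existsUnique_continuousMap_lifts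
      (roseMap.comp (f.comp polar)) (0, 0) (k • v) ((toRose_smul k v).trans hv)
  exact ⟨F, congrFun hF, hF₀ ▸ hk⟩

lemma lift_zero_mem_subtree (hF : ∀ p, toRose (F p) = roseMap (f (polar p)))
    (hF₀ : F (0, 0) ∈ subtree {true}) (h21 : MapsTo f C2 C1) {θ : ℝ} (hθ : θ ∈ Icc 0 3) :
    F (θ, 0) ∈ subtree {true} := by
  have hconn : IsPreconnected ((fun θ => F (θ, 0)) '' Icc 0 3) :=
    isPreconnected_Icc.image _ (by fun_prop)
  refine subset_subtree_of_isPreconnected hconn ?_ ⟨0, by norm_num, rfl⟩ hF₀ ⟨θ, hθ, rfl⟩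
  rintro _ ⟨θ, hθ, rfl⟩
  exact mem_labelledEdges_of_toRose_eq (h21 (polar_zero_mem_C2 hθ)) (hF _)

lemma lift_one_eq (hF : ∀ p, toRose (F p) = roseMap (f (polar p))) {b : X}
    (hb : ∀ z ∈ C1, f z = b) {θ θ' : ℝ} (hθ : θ ∈ Icc 2 3) (hθ' : θ' ∈ Icc 2 3) :
    F (θ, 1) = F (θ', 1) :=
  isQuotientCoveringMap_toRose.isCoveringMap.constOn_of_comp (g := fun θ => F (θ, 1))
    isPreconnected_Icc (by fun_prop) (fun x hx y hy => by
      rw [hF, hF, hb _ (polar_one_mem_C1 hx), hb _ (polar_one_mem_C1 hy)]) hθ hθ'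

lemma exists_deck (hF : ∀ p, toRose (F p) = roseMap (f (polar p))) {b : X}
    (hb : ∀ z ∈ C1, f z = b) : ∃ g : FreeGroup Bool,
    (∀ s ∈ Icc (0 : ℝ) 1, F (s + 1, 1) = g • F (s, 1)) ∧
      ∀ l ∈ Icc (0 : ℝ) 1, F (3, l) = g ^ 2 • F (0, l) := by
  obtain ⟨g, hg⟩ := exists_smul_eq_of_toRose_eq (v := F (1, 1)) (w := F (0, 1)) (by
    rw [hF, hF, polar_one_one])
  have hleg : ∀ s ∈ Icc (0 : ℝ) 1, F (s + 1, 1) = g • F (s, 1) := fun s hs =>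
    eq_smul_of_isPreconnected (F := fun s => F (s + 1, 1)) (G := fun s => F (s, 1))
      isPreconnected_Icc (by fun_prop) (by fun_prop)
      (fun s hs => by rw [hF, hF, isSeamInvariant_polar.2 s hs]) (left_mem_Icc.2 zero_le_one)
      (by rw [zero_add, hg]) hs
  have hcorner : F (3, 1) = g ^ 2 • F (0, 1) := by
    rw [lift_one_eq hF hb (right_mem_Icc.2 (by norm_num)) (left_mem_Icc.2 (by norm_num)),
      ← one_add_one_eq_two, hleg 1 (by norm_num), ← hg, smul_smul, sq]
  exact ⟨g, hleg, fun l hl =>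
    eq_smul_of_isPreconnected (F := fun l => F (3, l)) (G := fun l => F (0, l))
      isPreconnected_Icc (by fun_prop) (by fun_prop)
      (fun l hl => by rw [hF, hF, isSeamInvariant_polar.1 l hl]) (right_mem_Icc.2 zero_le_one)
      hcorner hl⟩

lemma exists_deck_mem_freeFactor (hF : ∀ p, toRose (F p) = roseMap (f (polar p)))
    (hF₀ : F (0, 0) ∈ subtree {true}) (hf : CollapsesC1 f) : ∃ g ∈ freeFactor {true},
    (∀ s ∈ Icc (0 : ℝ) 1, F (s + 1, 1) = g • F (s, 1)) ∧
      ∀ l ∈ Icc (0 : ℝ) 1, F (3, l) = g ^ 2 • F (0, l) := by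
  obtain ⟨h21, b, hb⟩ := hf
  obtain ⟨g, hleg, hside⟩ := exists_deck hF hb
  have hsq : g ^ 2 ∈ freeFactor {true} := by
    refine mem_freeFactor_of_smul_mem_subtree hF₀ ?_
    rw [← hside 0 (by norm_num)]
    exact lift_zero_mem_subtree hF hF₀ h21 (by norm_num)
  exact ⟨g, mem_freeFactor_of_pow_mem hsq, hleg, hside⟩

lemma exists_contractLift (hF : ∀ p, toRose (F p) = roseMap (f (polar p)))
    (hF₀ : F (0, 0) ∈ subtree {true}) (hf : CollapsesC1 f) : ∃ K : C(unitInterval × X, X),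
    ∀ t, ∀ p ∈ polarBox, K (t, polar p) = petalMap (contraction {true} (t, F p)) := by
  obtain ⟨g, hg, hleg, hside⟩ := exists_deck_mem_freeFactor hF hF₀ hf
  refine exists_continuous_of_isSeamInvariant
    ⟨fun w => petalMap (contraction {true} (w.1, F w.2)), by fun_prop⟩ fun t => ⟨?_, ?_⟩
  · intro l hl
    simp only [ContinuousMap.coe_mk, hside l hl, contraction_smul (pow_mem hg 2), petalMap_smul]
  · intro s hs
    simp only [ContinuousMap.coe_mk, hleg s hs, contraction_smul hg, petalMap_smul]

lemma CollapsesC1.homotopicWith_pushOut (hf : CollapsesC1 f) :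
    ContinuousMap.HomotopicWith f ((pushOut.curry 1).comp f) CollapsesC1 := by
  obtain ⟨h21, b, hb⟩ := hf
  refine ⟨⟨⟨⟨fun w => pushOut (w.1, f w.2), by fun_prop⟩, fun z => pushOut_zero _, fun z => rfl⟩,
    fun t => ⟨fun z hz => ?_, pushOut (t, b), fun z hz => ?_⟩⟩⟩
  · simpa [pushOut_of_mem_C1 (h21 hz)] using h21 hz
  · simp [hb z hz]

lemma CollapsesC1.exists_homotopicWith_mapsTo_C1 (hf : CollapsesC1 f) :
    ∃ g : C(X, X), ContinuousMap.HomotopicWith f g CollapsesC1 ∧ ∀ z, g z ∈ C1 := by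
  obtain ⟨F, hF, hF₀⟩ := exists_lift hf.1
  obtain ⟨K, hK⟩ := exists_contractLift hF hF₀ hf
  have hzero : ∀ z, K (0, z) = pushOut (1, f z) := fun z => by
    obtain ⟨p, hp, rfl⟩ := exists_polar_eq z
    rw [hK 0 p hp, contraction_zero, petalMap_eq_pushOut (hF p)]
  have hone : ∀ z, K (1, z) ∈ C1 := fun z => by
    obtain ⟨p, hp, rfl⟩ := exists_polar_eq z
    exact hK 1 p hp ▸ petalMap_mem_C1 (contraction_one_mem (singleton_nonempty _) _).1
  have hcollapse : ∀ t, CollapsesC1 (K.curry t) := fun t => by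
    refine ⟨fun z hz => ?_, K (t, polar (2, 1)), fun z hz => ?_⟩
    · obtain ⟨θ, hθ, rfl⟩ := exists_polar_eq_of_mem_C2 hz
      have hmem := lift_zero_mem_subtree hF hF₀ hf.1 hθ
      rw [ContinuousMap.curry_apply, hK t (θ, 0) ⟨hθ, by norm_num⟩, contraction_of_mem_subtree hmem]
      exact petalMap_mem_C1 hmem.1
    · obtain ⟨b, hb⟩ := hf.2
      obtain ⟨θ, hθ, rfl⟩ := exists_polar_eq_of_mem_C1 hz
      have h2 : (2 : ℝ) ∈ Icc 2 3 := by norm_num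
      rw [ContinuousMap.curry_apply, hK t _ (mem_polarBox_one (Icc_two_three_subset hθ)),
        hK t _ (mem_polarBox_one (Icc_two_three_subset h2)), lift_one_eq hF hb hθ h2]
  exact ⟨K.curry 1, hf.homotopicWith_pushOut.trans
    ⟨⟨⟨K, hzero, fun z => rfl⟩, hcollapse⟩⟩, hone⟩

end PushIntoCircle

section Collar

variable {f g h : C(X, X)} {T : Type*} [TopologicalSpace T]

lemma BoundaryHomotopic.trans (hfg : BoundaryHomotopic f g) (hgh : BoundaryHomotopic g h) :
    BoundaryHomotopic f h := by
  obtain ⟨H, hH⟩ := hfg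
  obtain ⟨K, hK⟩ := hgh
  refine ⟨H.trans K, fun x hx t => ?_⟩
  rw [ContinuousMap.Homotopy.trans_apply]
  split_ifs
  · exact hH x hx _
  · exact hK x hx _

lemma stretch_mem_C1_of_le_height {z : X} (hz : 3 / 4 ≤ height z) : stretch (3 / 2, z) ∈ C1 := by
  rw [mem_C1_iff, height_stretch (by linarith), min_eq_left]
  rw [abs_of_pos (by norm_num)]
  linarith

lemma boundaryHomotopic_comp_stretch (hf : MapsTo f Bd Bd) :
    BoundaryHomotopic f (f.comp (stretch.curry (3 / 2))) := by
  refine ⟨⟨⟨fun w => f (stretch (1 + w.1 / 2, w.2)), by fun_prop⟩, fun z => ?_, fun z => ?_⟩,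
    fun z hz t => hf (stretch_mem_Bd ?_ hz)⟩
  · simp [stretch_one]
  · norm_num
  · linarith [t.2.1]

/-- The coordinate on the collar of `C1` formed by the points of height at least `3/4`, which is
`0` on the inner end of the collar and `1` on `C1`. -/
noncomputable def collarCoord (z : X) : unitInterval :=
  projIcc 0 1 zero_le_one (4 * height z - 3)

@[fun_prop]
lemma continuous_collarCoord : Continuous collarCoord :=
  continuous_projIcc.comp (by fun_prop)

lemma coe_collarCoord {z : X} (hz : 3 / 4 ≤ height z) : (collarCoord z : ℝ) = 4 * height z - 3 :=
  congrArg Subtype.val (projIcc_of_mem zero_le_one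
    ⟨by linarith, by linarith [height_le_one z]⟩)

lemma collarCoord_of_mem_C1 {z : X} (hz : z ∈ C1) : collarCoord z = 1 := by
  rw [mem_C1_iff] at hz
  exact Subtype.ext ((coe_collarCoord (by linarith)).trans (by rw [hz]; norm_num))

/-- The family of maps that performs `F` on the complement of the collar of `C1`, stretched to all
of `X`, and traverses the path `K (t, ·, c)` along the fibre of the collar over `c ∈ C1`. -/
noncomputable def collarExtend (F : C(T × X, X)) (K : C(T × unitInterval × C1, X)) (w : T × X) :
    X :=
  open Classical in
  if h : 3 / 4 ≤ height w.2 then K (w.1, collarCoord w.2, ⟨_, stretch_mem_C1_of_le_height h⟩)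
  else F (w.1, stretch (3 / 2, w.2))

variable {F : C(T × X, X)} {K : C(T × unitInterval × C1, X)}

lemma collarExtend_of_le_height (t : T) {z : X} (hz : 3 / 4 ≤ height z) :
    collarExtend F K (t, z) = K (t, collarCoord z, ⟨_, stretch_mem_C1_of_le_height hz⟩) :=
  dif_pos hz

lemma collarExtend_of_height_le (hFK : ∀ t c, K (t, 0, c) = F (t, c)) (t : T) {z : X}
    (hz : height z ≤ 3 / 4) : collarExtend F K (t, z) = F (t, stretch (3 / 2, z)) := by
  rcases hz.lt_or_eq with hlt | heq
  · exact dif_neg hlt.not_ge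
  · have hzero : collarCoord z = 0 :=
      Subtype.ext ((coe_collarCoord heq.ge).trans (by rw [heq]; norm_num))
    rw [collarExtend_of_le_height t heq.ge, hzero, hFK]

lemma continuous_collarExtend (hFK : ∀ t c, K (t, 0, c) = F (t, c)) :
    Continuous (collarExtend F K) := by
  have hinner : ContinuousOn (collarExtend F K) {w | height w.2 ≤ 3 / 4} :=
    ContinuousOn.congr (f := fun w => F (w.1, stretch (3 / 2, w.2))) (by fun_prop)
      fun w hw => collarExtend_of_height_le hFK w.1 hw
  have hcollar : ContinuousOn (collarExtend F K) {w | 3 / 4 ≤ height w.2} := by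
    rw [continuousOn_iff_continuous_domRestrict]
    refine Continuous.congr (f := fun w : {w : T × X | 3 / 4 ≤ height w.2} =>
      K (w.1.1, collarCoord w.1.2, ⟨_, stretch_mem_C1_of_le_height w.2⟩)) (by fun_prop)
      fun w => (collarExtend_of_le_height w.1.1 w.2).symm
  rw [← continuousOn_univ, ← (eq_univ_of_forall fun w : T × X => le_total (height w.2) (3 / 4) :
    {w : T × X | height w.2 ≤ 3 / 4} ∪ {w | 3 / 4 ≤ height w.2} = univ)]
  exact hinner.union_of_isClosed hcollar (isClosed_le (by fun_prop) (by fun_prop))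
    (isClosed_le (by fun_prop) (by fun_prop))

lemma collarExtend_of_mem_C2 (hFK : ∀ t c, K (t, 0, c) = F (t, c)) (t : T) {z : X} (hz : z ∈ C2) :
    collarExtend F K (t, z) = F (t, z) := by
  have hle := height_le_of_mem_C2 hz
  rw [collarExtend_of_height_le hFK t (by linarith), stretch_of_height_le hle]

lemma collarExtend_of_mem_C1 (t : T) {z : X} (hz : z ∈ C1) :
    ∃ c : C1, collarExtend F K (t, z) = K (t, 1, c) := by
  have hle : 3 / 4 ≤ height z := by rw [mem_C1_iff.1 hz]; norm_num
  exact ⟨_, (collarExtend_of_le_height t hle).trans (by rw [collarCoord_of_mem_C1 hz])⟩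

lemma collarExtend_mem_Bd (hFK : ∀ t c, K (t, 0, c) = F (t, c)) (hF : ∀ t, ∀ z ∈ C2, F (t, z) ∈ Bd)
    (hK : ∀ t c, K (t, 1, c) ∈ Bd) (t : T) {z : X} (hz : z ∈ Bd) :
    collarExtend F K (t, z) ∈ Bd := by
  rcases hz with hz | hz
  · obtain ⟨c, hc⟩ := collarExtend_of_mem_C1 (F := F) (K := K) t hz
    exact hc ▸ hK t c
  · exact collarExtend_of_mem_C2 hFK t hz ▸ hF t z hz

lemma exists_boundaryHomotopic_collarExtend {F : C(unitInterval × X, X)}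
    {K : C(unitInterval × unitInterval × C1, X)} (hf : MapsTo f Bd Bd) (hF₀ : ∀ z, F (0, z) = f z)
    (hFK : ∀ t c, K (t, 0, c) = F (t, c)) (hK₀ : ∀ s c, K (0, s, c) = f c)
    (hF : ∀ t, ∀ z ∈ C2, F (t, z) ∈ Bd) (hK : ∀ t c, K (t, 1, c) ∈ Bd) :
    ∃ g : C(X, X), BoundaryHomotopic f g ∧ ∀ z, g z = collarExtend F K (1, z) := by
  have hcont := continuous_collarExtend hFK
  refine ⟨⟨fun z => collarExtend F K (1, z), by fun_prop⟩,
    (boundaryHomotopic_comp_stretch hf).trans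
      ⟨⟨⟨collarExtend F K, hcont⟩, fun z => ?_, fun z => rfl⟩,
        fun z hz t => collarExtend_mem_Bd hFK hF hK t hz⟩, fun z => rfl⟩
  change collarExtend F K (0, z) = f (stretch (3 / 2, z))
  rcases le_total (height z) (3 / 4) with hz | hz
  · rw [collarExtend_of_height_le hFK 0 hz, hF₀]
  · rw [collarExtend_of_le_height 0 hz, hK₀]

end Collar

section CollapseC1

variable {f : C(X, X)}

lemma mem_C2_of_path {γ : C(unitInterval, X)} (hγ : ∀ t, γ t ∈ Bd) (h0 : γ 0 ∈ C2) : γ 1 ∈ C2 := by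
  refine (hγ 1).resolve_left fun h1 => ?_
  rw [mem_C1_iff] at h1
  have hlow := height_le_of_mem_C2 h0
  obtain ⟨t, ht⟩ := mem_range_of_exists_le_of_exists_ge (f := fun t => height (γ t)) (c := 1 / 2)
    (by fun_prop) ⟨0, by linarith⟩ ⟨1, by linarith⟩
  rcases hγ t with h | h
  · linarith [mem_C1_iff.1 h]
  · linarith [height_le_of_mem_C2 h]

lemma C1_nonempty : C1.Nonempty := ⟨_, polar_one_mem_C1 (θ := 2) (by norm_num)⟩

lemma exists_homotopy_to_const_mem_C2 (h12 : MapsTo f C1 C2)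
    (h1 : Inessential (restrictMap f (h12.mono_right subset_union_right : MapsTo f C1 Bd))) :
    ∃ (k : C(unitInterval × C1, X)), ∃ b ∈ C2, (∀ c, k (0, c) = f c) ∧ (∀ c, k (1, c) = b) ∧
      ∀ w, k w ∈ Bd := by
  obtain ⟨b, ⟨k⟩⟩ := h1
  have hk₀ : ∀ c, (k (0, c) : X) = f c := fun c => congrArg Subtype.val (k.apply_zero c)
  have hk₁ : ∀ c, (k (1, c) : X) = b := fun c => congrArg Subtype.val (k.apply_one c)
  refine ⟨⟨fun w => k w, by fun_prop⟩, b, ?_, hk₀, hk₁, fun w => (k w).2⟩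
  obtain ⟨c, hc⟩ := C1_nonempty
  rw [← hk₁ ⟨c, hc⟩]
  refine mem_C2_of_path (γ := ⟨fun t => k (t, ⟨c, hc⟩), by fun_prop⟩) (fun t => (k _).2) ?_
  exact mem_of_eq_of_mem (hk₀ ⟨c, hc⟩) (h12 hc)

lemma exists_boundaryHomotopic_eq_const_on_C1 (h21 : MapsTo f C2 C1) (h12 : MapsTo f C1 C2)
    (h1 : Inessential (restrictMap f (h12.mono_right subset_union_right : MapsTo f C1 Bd))) :
    ∃ g : C(X, X), BoundaryHomotopic f g ∧ MapsTo g C2 C1 ∧ ∃ b ∈ C2, ∀ z ∈ C1, g z = b := by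
  obtain ⟨k, b, hb, hk₀, hk₁, hk⟩ := exists_homotopy_to_const_mem_C2 h12 h1
  have hf : MapsTo f Bd Bd := (h12.union_union h21).mono_right (union_comm _ _).subset
  let F : C(unitInterval × X, X) := ⟨fun w => f w.2, by fun_prop⟩
  let K : C(unitInterval × unitInterval × C1, X) :=
    ⟨fun w => k (w.1 * w.2.1, w.2.2), by fun_prop⟩
  have hFK : ∀ t c, K (t, 0, c) = F (t, c) := fun t c => by simp [K, F, hk₀]
  obtain ⟨g, hfg, hg⟩ := exists_boundaryHomotopic_collarExtend hf (fun z => rfl) hFK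
    (fun s c => by simp [K, hk₀]) (fun t z hz => Or.inl (h21 hz)) (fun t c => hk _)
  refine ⟨g, hfg, fun z hz => ?_, b, hb, fun z hz => ?_⟩
  · rw [hg, collarExtend_of_mem_C2 hFK 1 hz]
    exact h21 hz
  · obtain ⟨c, hc⟩ := collarExtend_of_mem_C1 (F := F) (K := K) 1 hz
    rw [hg, hc]
    simpa [K] using hk₁ c

end CollapseC1

section FixedPoint

/-- For a path `α` from `C2` to `C1`, a deformation, in the time `t`, of the constant path at
`α 0` to a path that first descends from `α 1 ∈ C1` radially to height `3/4`, and then follows `α`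
backwards within the points of height at most `3/4`. -/
noncomputable def returnPath (α : C(unitInterval, X)) : C(unitInterval × unitInterval, X) where
  toFun w := stretch (1 - w.1 * projIcc (0 : ℝ) 1 zero_le_one (2 * w.2) / 3,
    α (w.1 * projIcc (0 : ℝ) 1 zero_le_one (2 - 2 * w.2)))
  continuous_toFun := by fun_prop

variable {α : C(unitInterval, X)}

lemma returnPath_apply (t s : unitInterval) : returnPath α (t, s) =
    stretch (1 - t * projIcc (0 : ℝ) 1 zero_le_one (2 * s) / 3,
      α (t * projIcc (0 : ℝ) 1 zero_le_one (2 - 2 * s))) := rfl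

lemma returnPath_zero_left (s : unitInterval) : returnPath α (0, s) = α 0 := by
  simp [returnPath_apply, stretch_one]

lemma returnPath_zero_right (t : unitInterval) : returnPath α (t, 0) = α t := by
  have hend : projIcc (0 : ℝ) 1 zero_le_one 2 = 1 := projIcc_of_right_le _ (by norm_num)
  simp [returnPath_apply, stretch_one, hend]

lemma returnPath_one_right (hα : α 0 ∈ C2) (t : unitInterval) : returnPath α (t, 1) = α 0 := by
  simp [returnPath_apply, stretch_of_height_le (height_le_of_mem_C2 hα)]

lemma returnPath_one_of_le_half {s : unitInterval} (hs : (s : ℝ) ≤ 1 / 2) :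
    returnPath α (1, s) = stretch (1 - 2 * s / 3, α 1) := by
  rw [returnPath_apply, projIcc_of_right_le _ (by linarith : (1 : ℝ) ≤ 2 - 2 * s),
    projIcc_of_mem _ (⟨by linarith [s.2.1], by linarith⟩ : 2 * (s : ℝ) ∈ Icc 0 1)]
  simp only [Icc.coe_one, one_mul]
  rfl

lemma height_returnPath_one_of_half_le {s : unitInterval} (hs : 1 / 2 ≤ (s : ℝ)) :
    height (returnPath α (1, s)) ≤ 3 / 4 := by
  rw [returnPath_apply, projIcc_of_right_le _ (by linarith : (1 : ℝ) ≤ 2 * s)]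
  set z := α (1 * projIcc 0 1 zero_le_one (2 - 2 * (s : ℝ)))
  rcases le_total (height z) (1 / 4) with hz | hz
  · rw [stretch_of_height_le hz]
    linarith
  · rw [height_stretch hz]
    refine (min_le_right _ _).trans ?_
    norm_num
    linarith [height_le_one z]

lemma height_returnPath_one_of_le_half (hα : α 1 ∈ C1) {s : unitInterval} (hs : (s : ℝ) ≤ 1 / 2) :
    height (returnPath α (1, s)) = 1 - s / 2 := by
  have hone := mem_C1_iff.1 hα
  rw [returnPath_one_of_le_half hs, height_stretch (by rw [hone]; norm_num), hone,
    abs_of_pos (by linarith), min_eq_right (by linarith [s.2.1])]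
  ring

variable {F : C(unitInterval × X, X)} {K : C(unitInterval × unitInterval × C1, X)}

lemma eq_of_collarExtend_returnPath_eq (hα : α 1 ∈ C1)
    (hFK : ∀ t c, K (t, 0, c) = F (t, c)) (hF : ∀ z, F (1, z) ∈ C1)
    (hK : ∀ t s c, K (t, s, c) = returnPath α (t, s)) {z : X} (hz : collarExtend F K (1, z) = z) :
    z = stretch (7 / 9, α 1) := by
  rcases le_total (height z) (3 / 4) with hle | hge
  · have hmem : z ∈ C1 := by
      rw [← hz, collarExtend_of_height_le hFK 1 hle]
      exact hF _
    linarith [mem_C1_iff.1 hmem]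
  have hpath : returnPath α (1, collarCoord z) = z := by
    rw [← hK, ← collarExtend_of_le_height 1 hge, hz]
  have hcoord := coe_collarCoord hge
  rcases le_total (collarCoord z : ℝ) (1 / 2) with hs | hs
  · have hheight := height_returnPath_one_of_le_half hα hs
    rw [hpath] at hheight
    rw [← hpath, returnPath_one_of_le_half hs, show (collarCoord z : ℝ) = 1 / 3 by linarith]
    norm_num
  · have hheight := height_returnPath_one_of_half_le (α := α) hs
    rw [hpath] at hheight
    linarith

lemma collarExtend_returnPath_stretch (hα : α 1 ∈ C1)
    (hK : ∀ t s c, K (t, s, c) = returnPath α (t, s)) :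
    collarExtend F K (1, stretch (7 / 9, α 1)) = stretch (7 / 9, α 1) := by
  have hone := mem_C1_iff.1 hα
  have hheight : height (stretch (7 / 9, α 1)) = 5 / 6 := by
    rw [height_stretch (by rw [hone]; norm_num), hone]
    norm_num
  have hge : 3 / 4 ≤ height (stretch (7 / 9, α 1)) := by rw [hheight]; norm_num
  have hcoord : (collarCoord (stretch (7 / 9, α 1)) : ℝ) = 1 / 3 := by
    rw [coe_collarCoord hge, hheight]
    norm_num
  rw [collarExtend_of_le_height 1 hge, hK, returnPath_one_of_le_half (by rw [hcoord]; norm_num),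
    hcoord]
  norm_num

lemma exists_boundaryHomotopic_unique_fixedPoint {f g : C(X, X)}
    (hfg : ContinuousMap.HomotopicWith f g CollapsesC1) (hg : ∀ z, g z ∈ C1)
    (hf : MapsTo f C1 C2) :
    ∃ g' : C(X, X), BoundaryHomotopic f g' ∧ ∃ x₀, {x | g' x = x} = {x₀} := by
  obtain ⟨H⟩ := hfg
  obtain ⟨c₀, hc₀⟩ := C1_nonempty
  have hconst : ∀ t, ∀ c ∈ C1, H (t, c) = H (t, c₀) := fun t c hc => by
    obtain ⟨b, hb⟩ := (H.prop t).2
    exact (hb c hc).trans (hb c₀ hc₀).symm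
  let α : C(unitInterval, X) := ⟨fun t => H (t, c₀), by fun_prop⟩
  have hα₀ : α 0 ∈ C2 := (H.apply_zero c₀).symm ▸ hf hc₀
  have hα₁ : α 1 ∈ C1 := (H.apply_one c₀).symm ▸ hg c₀
  let F : C(unitInterval × X, X) := H.toContinuousMap
  let K : C(unitInterval × unitInterval × C1, X) :=
    ⟨fun w => returnPath α (w.1, w.2.1), by fun_prop⟩
  have hF₁ : ∀ z, F (1, z) ∈ C1 := fun z => (H.apply_one z).symm ▸ hg z
  have hFK : ∀ t c, K (t, 0, c) = F (t, c) := fun t c =>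
    (returnPath_zero_right t).trans (hconst t c c.2).symm
  have h21 : MapsTo f C2 C1 := fun z hz => H.apply_zero z ▸ (H.prop 0).1 hz
  have hK₀ : ∀ s c, K (0, s, c) = f c := fun s c =>
    (returnPath_zero_left s).trans ((hconst 0 c c.2).symm.trans (H.apply_zero _))
  obtain ⟨g', hfg', hg'⟩ := exists_boundaryHomotopic_collarExtend
    ((hf.union_union h21).mono_right (union_comm _ _).subset) H.apply_zero hFK hK₀
    (fun t z hz => Or.inl ((H.prop t).1 hz))
    (fun t c => Or.inr ((returnPath_one_right hα₀ t).symm ▸ hα₀))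
  refine ⟨g', hfg', stretch (7 / 9, α 1), Subset.antisymm (fun z hz => ?_) ?_⟩
  · exact eq_of_collarExtend_returnPath_eq hα₁ hFK hF₁ (fun _ _ _ => rfl) ((hg' z).symm.trans hz)
  · exact singleton_subset_iff.2
      ((hg' _).trans (collarExtend_returnPath_stretch hα₁ fun _ _ _ => rfl))

end FixedPoint

theorem stmt_13_general (f : C(X, X)) (h21 : MapsTo f C2 C1) (h12 : MapsTo f C1 C2)
    (h1 : Inessential (restrictMap f (h12.mono_right Set.subset_union_right : MapsTo f C1 Bd))) :
    ∃ g : C(X, X), BoundaryHomotopic f g ∧ ∃ x₀ : X, {x : X | g x = x} = {x₀} := by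
  obtain ⟨f₁, hf, h21₁, b, hb, hf₁⟩ := exists_boundaryHomotopic_eq_const_on_C1 h21 h12 h1
  have hcollapse : CollapsesC1 f₁ := ⟨h21₁, b, hf₁⟩
  obtain ⟨f₂, hf₂, hC1⟩ := hcollapse.exists_homotopicWith_mapsTo_C1
  obtain ⟨g, hg, hfix⟩ := exists_boundaryHomotopic_unique_fixedPoint hf₂ hC1
    fun z hz => (hf₁ z hz).symm ▸ hb
  exact ⟨g, hf.trans hg, hfix⟩

/-- A boundary semi-essential map of the punctured Möbius band interchanging the
boundary circles, with `f|C₂ : C₂ → C₁` essential and `f|C₁` inessential, is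
boundary-homotopic to a map with exactly one fixed point. -/
theorem stmt_13 (f : C(X, X)) (hf : BoundaryPreserving f)
    (h21 : MapsTo f C2 C1) (h12 : MapsTo f C1 C2)
    (he2 : Essential (restrictMap f h21))
    (h1 : Inessential (restrictMap f (h12.mono_right Set.subset_union_right : MapsTo f C1 Bd))) :
    ∃ g : C(X, X), BoundaryHomotopic f g ∧ ∃ x₀ : X, {x : X | g x = x} = {x₀} :=
  stmt_13_general f h21 h12 h1

end PMB
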